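/- arXiv:math/0411443 — 5 statements merged into one kernel-verified Lean document; each statement's English description precedes it below -/
import Mathlib

section
/- Let R_1 = {x + iy ∈ ℂ : 0 < x < 2√2·π, 0 < y < 2π}, R_2 = {x + iy ∈ ℂ : 0 < x < 2√2·π, 2π < y < 4π}, and Ω = R_1 ∪ R_2. Define F : Ω → ℂ by F(z) = √2·i·z + 2√2·π for z ∈ R_1 and F(z) = √2·i·z + 4√2·π for z ∈ R_2. Then F has a dense orbit in Ω: there exists a sequence {p_n}_{n=0}^∞ ⊂ Ω with F(p_n) = p_{n+1} for all n such that {p_n} is dense in Ω. Moreover, given any dense open subset W ⊂ Ω, the sequence {p_n} can be chosen to be contained in W. -/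
/-!
Let `R` be the open rectangle `(0, 2√2·π) × (0, 4π)`, so that `Ω = R1 ∪ R2` is dense in `R`. On each
of `R1` and `R2` the map `Fstep` is a similarity of ratio `√2` onto the whole of `R`
(`exists_preimage`). Write `pull A = {z ∈ Ω | F z ∈ A}`.

* If `A` is open and dense in `R`, so is `pull A`; hence every `pull^[n] W` is open and dense in `R`.
* For nonempty open `U ⊆ R` the open set `⋃ n, pull^[n] U` is dense in `R`: near any point of `R`
  there is a point `z` whose first `n` iterates lie in `Ω`, and following the inverse branches along
  the itinerary of `z` backwards from a point of `U` gives a point at distance `O(√2 ^ (-n))` from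
  `z` that is mapped into `U` by the `n`-th iterate (`exists_shadow`).

By the Baire category theorem some point lies in all the sets `pull^[n] W`, and in
`⋃ n, pull^[n] (U ∩ R)` for each `U` of a countable basis that meets `R`. Its orbit stays in `W` and
is dense.
-/

/-- The open rectangle `R₁` with corners `0` and `2√2·π + 2π·i`. -/
def R1 : Set ℂ :=
  {z | 0 < z.re ∧ z.re < 2 * Real.sqrt 2 * Real.pi ∧ 0 < z.im ∧ z.im < 2 * Real.pi}

/-- The open rectangle `R₂` with corners `2π·i` and `2√2·π + 4π·i`. -/
def R2 : Set ℂ :=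
  {z | 0 < z.re ∧ z.re < 2 * Real.sqrt 2 * Real.pi ∧
       2 * Real.pi < z.im ∧ z.im < 4 * Real.pi}

open scoped Classical in
/-- The expanding map `F` of Step 1: `F(z) = √2·i·z + 2√2·π` on `R₁` and
`F(z) = √2·i·z + 4√2·π` on `R₂`. -/
noncomputable def Fstep (z : ℂ) : ℂ :=
  if z ∈ R1 then (Real.sqrt 2 : ℂ) * Complex.I * z + 2 * (Real.sqrt 2 : ℂ) * (Real.pi : ℂ)
  else (Real.sqrt 2 : ℂ) * Complex.I * z + 4 * (Real.sqrt 2 : ℂ) * (Real.pi : ℂ)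

/-- The full open rectangle `(0, 2√2·π) × (0, 4π)`, the image of each branch of `Fstep`. -/
def bigRect : Set ℂ :=
  {z | 0 < z.re ∧ z.re < 2 * Real.sqrt 2 * Real.pi ∧ 0 < z.im ∧ z.im < 4 * Real.pi}

/-- The preimage of `A` under `Fstep` regarded as a map on `Ω = R1 ∪ R2` only. -/
def pull (A : Set ℂ) : Set ℂ := {z | z ∈ R1 ∪ R2 ∧ Fstep z ∈ A}

/-- `A` is dense in `bigRect`, in metric form. -/
def DenseInRect (A : Set ℂ) : Prop := ∀ z ∈ bigRect, ∀ ε > 0, ∃ a ∈ A, dist a z < ε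

lemma isOpen_rect (a b c d : ℝ) : IsOpen {z : ℂ | a < z.re ∧ z.re < b ∧ c < z.im ∧ z.im < d} := by
  have hre := Complex.continuous_re
  have him := Complex.continuous_im
  exact (isOpen_lt continuous_const hre).inter ((isOpen_lt hre continuous_const).inter
    ((isOpen_lt continuous_const him).inter (isOpen_lt him continuous_const)))

lemma isOpen_R1 : IsOpen R1 := isOpen_rect _ _ _ _

lemma isOpen_R2 : IsOpen R2 := isOpen_rect _ _ _ _

lemma isOpen_bigRect : IsOpen bigRect := isOpen_rect _ _ _ _

lemma union_subset_bigRect : R1 ∪ R2 ⊆ bigRect := by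
  have hpi := Real.pi_pos
  rintro z (⟨h1, h2, h3, h4⟩ | ⟨h1, h2, h3, h4⟩)
  · exact ⟨h1, h2, h3, by linarith⟩
  · exact ⟨h1, h2, by linarith, h4⟩

lemma Fstep_of_R1 {z : ℂ} (hz : z ∈ R1) : Fstep z =
    (Real.sqrt 2 : ℂ) * Complex.I * z + 2 * (Real.sqrt 2 : ℂ) * (Real.pi : ℂ) := if_pos hz

lemma Fstep_of_R2 {z : ℂ} (hz : z ∈ R2) : Fstep z =
    (Real.sqrt 2 : ℂ) * Complex.I * z + 4 * (Real.sqrt 2 : ℂ) * (Real.pi : ℂ) := by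
  refine if_neg fun h => ?_
  exact lt_asymm h.2.2.2 hz.2.2.1

lemma dist_affine (z z' c : ℂ) : dist ((Real.sqrt 2 : ℂ) * Complex.I * z' + c)
    ((Real.sqrt 2 : ℂ) * Complex.I * z + c) = Real.sqrt 2 * dist z' z := by
  rw [dist_add_right, dist_eq_norm, ← mul_sub, norm_mul, norm_mul, Complex.norm_I, mul_one,
    Complex.norm_real, Real.norm_of_nonneg (Real.sqrt_nonneg 2), dist_eq_norm]

lemma Fstep_mem_bigRect {z : ℂ} (hz : z ∈ R1 ∪ R2) : Fstep z ∈ bigRect := by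
  have hs : 0 < Real.sqrt 2 := by positivity
  have hs2 : Real.sqrt 2 * Real.sqrt 2 = 2 := Real.mul_self_sqrt (by norm_num)
  rcases hz with hz | hz
  · rw [Fstep_of_R1 hz]
    obtain ⟨h1, h2, h3, h4⟩ := hz
    refine ⟨?_, ?_, ?_, ?_⟩ <;> simp <;> nlinarith
  · rw [Fstep_of_R2 hz]
    obtain ⟨h1, h2, h3, h4⟩ := hz
    refine ⟨?_, ?_, ?_, ?_⟩ <;> simp <;> nlinarith

/-- The inverse branch of `Fstep` whose image is the half of `Ω` containing `z`: it is defined on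
all of `bigRect` and contracts distances by `√2`. -/
lemma exists_preimage {z w : ℂ} (hz : z ∈ R1 ∪ R2) (hw : w ∈ bigRect) :
    ∃ z' ∈ R1 ∪ R2, Fstep z' = w ∧ dist w (Fstep z) = Real.sqrt 2 * dist z' z := by
  have hs : 0 < Real.sqrt 2 := by positivity
  have hs2 : Real.sqrt 2 * Real.sqrt 2 = 2 := Real.mul_self_sqrt (by norm_num)
  obtain ⟨h1, h2, h3, h4⟩ := hw
  have hx0 : 0 < w.re / Real.sqrt 2 := by positivity
  have hx1 : w.re / Real.sqrt 2 < 2 * Real.pi := by rw [div_lt_iff₀ hs]; linarith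
  have hy0 : 0 < w.im / Real.sqrt 2 := by positivity
  have hy1 : w.im / Real.sqrt 2 < 2 * Real.sqrt 2 * Real.pi := by
    rw [div_lt_iff₀ hs]
    linear_combination h4 - 2 * Real.pi * hs2
  rcases hz with hz | hz
  · have hz' : (⟨w.im / Real.sqrt 2, 2 * Real.pi - w.re / Real.sqrt 2⟩ : ℂ) ∈ R1 :=
      ⟨hy0, hy1, by simp; linarith, by simp; linarith⟩
    have hF : Fstep ⟨w.im / Real.sqrt 2, 2 * Real.pi - w.re / Real.sqrt 2⟩ = w := by
      rw [Fstep_of_R1 hz']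
      apply Complex.ext <;> simp <;> field_simp
      ring
    refine ⟨_, Or.inl hz', hF, ?_⟩
    rw [← dist_affine, ← Fstep_of_R1 hz, ← Fstep_of_R1 hz', hF]
  · have hz' : (⟨w.im / Real.sqrt 2, 4 * Real.pi - w.re / Real.sqrt 2⟩ : ℂ) ∈ R2 :=
      ⟨hy0, hy1, by simp; linarith, by simp; linarith⟩
    have hF : Fstep ⟨w.im / Real.sqrt 2, 4 * Real.pi - w.re / Real.sqrt 2⟩ = w := by
      rw [Fstep_of_R2 hz']
      apply Complex.ext <;> simp <;> field_simp
      ring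
    refine ⟨_, Or.inr hz', hF, ?_⟩
    rw [← dist_affine, ← Fstep_of_R2 hz, ← Fstep_of_R2 hz', hF]

lemma pull_mono {A B : Set ℂ} (h : A ⊆ B) : pull A ⊆ pull B := fun _ hz => ⟨hz.1, h hz.2⟩

lemma pull_iterate_mono {A B : Set ℂ} (h : A ⊆ B) (n : ℕ) : pull^[n] A ⊆ pull^[n] B := by
  induction n with
  | zero => exact h
  | succ n ih =>
    rw [Function.iterate_succ_apply', Function.iterate_succ_apply']
    exact pull_mono ih

lemma pull_iterate_subset {A : Set ℂ} (h : A ⊆ bigRect) (n : ℕ) : pull^[n] A ⊆ bigRect := by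
  cases n with
  | zero => exact h
  | succ n =>
    rw [Function.iterate_succ_apply']
    exact fun z hz => union_subset_bigRect hz.1

lemma iterate_mem_of_mem_pull {A : Set ℂ} (n : ℕ) {z : ℂ} (hz : z ∈ pull^[n] A) :
    Fstep^[n] z ∈ A := by
  induction n generalizing z with
  | zero => exact hz
  | succ n ih =>
    rw [Function.iterate_succ_apply'] at hz
    rw [Function.iterate_succ_apply]
    exact ih hz.2

lemma isOpen_pull {A : Set ℂ} (hA : IsOpen A) : IsOpen (pull A) := by
  have h : pull A =
      (R1 ∩ (fun z => (Real.sqrt 2 : ℂ) * Complex.I * z +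
        2 * (Real.sqrt 2 : ℂ) * (Real.pi : ℂ)) ⁻¹' A) ∪
      (R2 ∩ (fun z => (Real.sqrt 2 : ℂ) * Complex.I * z +
        4 * (Real.sqrt 2 : ℂ) * (Real.pi : ℂ)) ⁻¹' A) := by
    ext z
    constructor
    · rintro ⟨hz | hz, hzA⟩
      · exact Or.inl ⟨hz, by rwa [Fstep_of_R1 hz] at hzA⟩
      · exact Or.inr ⟨hz, by rwa [Fstep_of_R2 hz] at hzA⟩
    · rintro (⟨hz, hzA⟩ | ⟨hz, hzA⟩)
      · exact ⟨Or.inl hz, by rwa [Fstep_of_R1 hz]⟩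
      · exact ⟨Or.inr hz, by rwa [Fstep_of_R2 hz]⟩
  rw [h]
  exact (isOpen_R1.inter (hA.preimage (by fun_prop))).union
    (isOpen_R2.inter (hA.preimage (by fun_prop)))

lemma isOpen_pull_iterate {A : Set ℂ} (hA : IsOpen A) (n : ℕ) : IsOpen (pull^[n] A) := by
  induction n with
  | zero => exact hA
  | succ n ih =>
    rw [Function.iterate_succ_apply']
    exact isOpen_pull ih

lemma dense_union : DenseInRect (R1 ∪ R2) := by
  rintro z ⟨h1, h2, h3, h4⟩ ε hε
  have hpi := Real.pi_pos
  rcases lt_trichotomy z.im (2 * Real.pi) with h | h | h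
  · exact ⟨z, Or.inl ⟨h1, h2, h3, h⟩, by simpa using hε⟩
    -- a point of the segment separating `R1` from `R2` is moved up into `R2`
  · have hm : 0 < min (ε / 2) Real.pi := by positivity
    have hm1 := min_le_left (ε / 2) Real.pi
    have hm2 := min_le_right (ε / 2) Real.pi
    refine ⟨z + (min (ε / 2) Real.pi : ℝ) * Complex.I, Or.inr ⟨?_, ?_, ?_, ?_⟩, ?_⟩
    · simpa using h1
    · simpa using h2
    · rw [Complex.add_im, Complex.im_ofReal_mul, Complex.I_im, mul_one]
      linarith
    · rw [Complex.add_im, Complex.im_ofReal_mul, Complex.I_im, mul_one]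
      linarith
    · rw [dist_eq_norm, add_sub_cancel_left, norm_mul, Complex.norm_I, Complex.norm_real,
        Real.norm_of_nonneg hm.le]
      linarith
  · exact ⟨z, Or.inr ⟨h1, h2, h, h4⟩, by simpa using hε⟩

lemma dense_pull {A : Set ℂ} (hAsub : A ⊆ bigRect) (hA : DenseInRect A) :
    DenseInRect (pull A) := by
  intro z0 hz0 ε hε
  obtain ⟨z, hz, hzd⟩ := dense_union z0 hz0 (ε / 2) (by linarith)
  obtain ⟨a, ha, had⟩ := hA (Fstep z) (Fstep_mem_bigRect hz) (ε / 2) (by linarith)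
  obtain ⟨z', hz', hF, hd⟩ := exists_preimage hz (hAsub ha)
  refine ⟨z', ⟨hz', by rwa [hF]⟩, ?_⟩
  have h1 : 1 ≤ Real.sqrt 2 := Real.one_le_sqrt.2 (by norm_num)
  have h2 : dist z' z ≤ Real.sqrt 2 * dist z' z := le_mul_of_one_le_left dist_nonneg h1
  have h3 := dist_triangle z' z z0
  linarith

lemma dense_pull_iterate {A : Set ℂ} (hAsub : A ⊆ bigRect) (hA : DenseInRect A) (n : ℕ) :
    DenseInRect (pull^[n] A) := by
  induction n with
  | zero => exact hA
  | succ n ih =>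
    rw [Function.iterate_succ_apply']
    exact dense_pull (pull_iterate_subset hAsub n) ih

/-- The constant `50` crudely bounds the diameter of the rectangle, using `√2 < 2` and `π < 4`. -/
lemma dist_le_of_mem {z w : ℂ} (hz : z ∈ bigRect) (hw : w ∈ bigRect) : dist w z ≤ 50 := by
  obtain ⟨h1, h2, h3, h4⟩ := hz
  obtain ⟨k1, k2, k3, k4⟩ := hw
  have hpi := Real.pi_lt_four
  have hpi0 := Real.pi_pos
  have hs : Real.sqrt 2 < 2 := by
    rw [Real.sqrt_lt' (by norm_num)]; norm_num
  have hb : 2 * Real.sqrt 2 * Real.pi < 32 := by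
    nlinarith [Real.sqrt_nonneg 2]
  have hre : |(w - z).re| ≤ 32 := by
    rw [Complex.sub_re, abs_le]; constructor <;> linarith
  have him : |(w - z).im| ≤ 16 := by
    rw [Complex.sub_im, abs_le]; constructor <;> linarith
  rw [dist_eq_norm]
  linarith [Complex.norm_le_abs_re_add_abs_im (w - z)]

/-- Any `w` in the rectangle has an `n`-th preimage along the itinerary of `z`, and that preimage is
exponentially close to `z`. -/
lemma exists_shadow {w : ℂ} (hw : w ∈ bigRect) (n : ℕ) {z : ℂ} (hz : z ∈ pull^[n] bigRect) :
    ∃ z' ∈ pull^[n] {w}, Real.sqrt 2 ^ n * dist z' z ≤ 50 := by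
  induction n generalizing z with
  | zero => exact ⟨w, rfl, by simpa using dist_le_of_mem hz hw⟩
  | succ n ih =>
    rw [Function.iterate_succ_apply'] at hz
    obtain ⟨y, hy, hyd⟩ := ih hz.2
    have hyR : y ∈ bigRect := pull_iterate_subset (Set.singleton_subset_iff.2 hw) n hy
    obtain ⟨z', hz', hF, hd⟩ := exists_preimage hz.1 hyR
    refine ⟨z', ?_, ?_⟩
    · rw [Function.iterate_succ_apply']
      exact ⟨hz', by rwa [hF]⟩
    · rwa [pow_succ, mul_assoc, ← hd]

/-- Topological transitivity of `Fstep`: points whose orbit visits `U` are dense. -/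
lemma dense_iUnion_pull {U : Set ℂ} (hU : U ⊆ bigRect) (hne : U.Nonempty) :
    DenseInRect (⋃ n, pull^[n] U) := by
  obtain ⟨w, hw⟩ := hne
  intro z0 hz0 ε hε
  have h1 : 1 < Real.sqrt 2 := by
    rw [Real.lt_sqrt (by norm_num)]; norm_num
  obtain ⟨n, hn⟩ := pow_unbounded_of_one_lt (50 / (ε / 2)) h1
  rw [div_lt_iff₀ (by linarith)] at hn
  have hself : DenseInRect bigRect := fun z hz ε hε => ⟨z, hz, by simpa using hε⟩
  obtain ⟨z, hz, hzd⟩ := dense_pull_iterate subset_rfl hself n z0 hz0 (ε / 2) (by linarith)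
  obtain ⟨z', hz', hd⟩ := exists_shadow (hU hw) n hz
  refine ⟨z', Set.mem_iUnion.2 ⟨n, pull_iterate_mono (Set.singleton_subset_iff.2 hw) n hz'⟩, ?_⟩
  have h2 : dist z' z < ε / 2 :=
    lt_of_mul_lt_mul_left (hd.trans_lt hn) (by positivity)
  have h3 := dist_triangle z' z z0
  linarith

/-- The Baire category theorem inside the rectangle. -/
lemma exists_mem_all {ι : Type*} [Countable ι] (S : ι → Set ℂ) (ho : ∀ i, IsOpen (S i))
    (hd : ∀ i, DenseInRect (S i)) : ∃ z, ∀ i, z ∈ S i := by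
  -- adding the exterior of the rectangle makes each set dense in `ℂ`
  have hD : Dense (⋂ i, (S i ∪ (closure bigRect)ᶜ)) := by
    refine dense_iInter_of_isOpen (fun i => (ho i).union isClosed_closure.isOpen_compl) fun i => ?_
    have hsub : bigRect ⊆ closure (S i) := fun z hz => Metric.mem_closure_iff.2 fun ε hε => by
      obtain ⟨a, ha, had⟩ := hd i z hz ε hε
      exact ⟨a, ha, by rwa [dist_comm]⟩
    intro z
    rw [closure_union]
    by_cases hz : z ∈ closure bigRect
    · exact Or.inl (closure_minimal hsub isClosed_closure hz)
    · exact Or.inr (subset_closure hz)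
  have hpi := Real.pi_pos
  have hne : bigRect.Nonempty :=
    ⟨⟨Real.sqrt 2 * Real.pi, 2 * Real.pi⟩, by positivity, by
      have : 0 < Real.sqrt 2 * Real.pi := by positivity
      simp only
      linarith, by positivity, by simp only; linarith⟩
  obtain ⟨z, hz, hzS⟩ := hD.inter_open_nonempty _ isOpen_bigRect hne
  refine ⟨z, fun i => ?_⟩
  rcases Set.mem_iInter.1 hzS i with h | h
  · exact h
  · exact absurd (subset_closure hz) h

/-- **Step 1 of Theorem 1.2.** The map `F` on `Ω = R₁ ∪ R₂` has a dense orbit in `Ω`;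
moreover, given any dense open subset `W ⊆ Ω`, the orbit can be chosen inside `W`. -/
theorem Fstep_dense_orbit (W : Set ℂ) (hWopen : IsOpen W) (hWsub : W ⊆ R1 ∪ R2)
    (hWdense : R1 ∪ R2 ⊆ closure W) :
    ∃ p : ℕ → ℂ, (∀ n, p n ∈ W) ∧ (∀ n, Fstep (p n) = p (n + 1)) ∧
      R1 ∪ R2 ⊆ closure (Set.range p) := by
  have hWR : W ⊆ bigRect := hWsub.trans union_subset_bigRect
  have hWd : DenseInRect W := by
    intro z0 hz0 ε hε
    obtain ⟨z, hz, hzd⟩ := dense_union z0 hz0 (ε / 2) (by linarith)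
    obtain ⟨a, ha, had⟩ := Metric.mem_closure_iff.1 (hWdense hz) (ε / 2) (by linarith)
    rw [dist_comm] at had
    exact ⟨a, ha, by linarith [dist_triangle a z z0]⟩
  let B := {U : Set ℂ // U ∈ TopologicalSpace.countableBasis ℂ ∧ (U ∩ bigRect).Nonempty}
  have hB : Countable B :=
    ((TopologicalSpace.countable_countableBasis ℂ).mono fun U hU => hU.1 :
      {U : Set ℂ | U ∈ TopologicalSpace.countableBasis ℂ ∧
        (U ∩ bigRect).Nonempty}.Countable).to_subtype
  obtain ⟨z, hz⟩ := exists_mem_all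
    (Sum.elim (fun n : ℕ => pull^[n] W) (fun U : B => ⋃ n, pull^[n] (U.1 ∩ bigRect)))
    (by
      rintro (n | U)
      · exact isOpen_pull_iterate hWopen n
      · exact isOpen_iUnion fun n => isOpen_pull_iterate
          ((TopologicalSpace.isOpen_of_mem_countableBasis U.2.1).inter isOpen_bigRect) n)
    (by
      rintro (n | U)
      · exact dense_pull_iterate hWR hWd n
      · exact dense_iUnion_pull Set.inter_subset_right U.2.2)
  refine ⟨fun n => Fstep^[n] z, fun n => iterate_mem_of_mem_pull n (hz (Sum.inl n)),
    fun n => (Function.iterate_succ_apply' Fstep n z).symm, fun y hy => ?_⟩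
  rw [(TopologicalSpace.isBasis_countableBasis ℂ).mem_closure_iff]
  intro U hU hyU
  obtain ⟨n, hn⟩ := Set.mem_iUnion.1
    (hz (Sum.inr ⟨U, hU, y, hyU, union_subset_bigRect hy⟩))
  exact ⟨_, (iterate_mem_of_mem_pull n hn).1, n, rfl⟩
end

section
/- Let R_1 = {x + iy ∈ ℂ : 0 < x < 2√2·π, 0 < y < 2π}, R_2 = {x + iy ∈ ℂ : 0 < x < 2√2·π, 2π < y < 4π}, and Ω = R_1 ∪ R_2. Define F : Ω → ℂ by F(z) = √2·i·z + 2√2·π for z ∈ R_1 and F(z) = √2·i·z + 4√2·π for z ∈ R_2. Then for every point p ∈ Ω and every open neighborhood U ⊂ Ω of p, there exist a nonempty connected open subset V ⊂ U and an integer N ≥ 1 such that F^j(V) ⊂ Ω for each 1 ≤ j ≤ N, F^N(V) equals R_1 or R_2, and consequently Ω ⊂ F^{N+1}(V). -/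
/-- The affine map `z ↦ √2·i·z + 2√2π·k`; it is the branch of `Fstep` on `R1` for `k = 1` and on
`R2` for `k = 2`. -/
noncomputable def branch (k : ℝ) (z : ℂ) : ℂ :=
  (Real.sqrt 2 : ℂ) * Complex.I * z + ((2 * Real.sqrt 2 * Real.pi * k : ℝ) : ℂ)

/-- The closed rectangle `[0, 2√2π] × [0, 4π]`, the closure of `R1 ∪ R2`. -/
def closedBox : Set ℂ :=
  {z | 0 ≤ z.re ∧ z.re ≤ 2 * Real.sqrt 2 * Real.pi ∧ 0 ≤ z.im ∧ z.im ≤ 4 * Real.pi}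

lemma branch_re (k : ℝ) (z : ℂ) :
    (branch k z).re = Real.sqrt 2 * (2 * Real.pi * k - z.im) := by
  simp [branch]; ring

lemma branch_im (k : ℝ) (z : ℂ) : (branch k z).im = Real.sqrt 2 * z.re := by
  simp [branch]

lemma continuous_branch (k : ℝ) : Continuous (branch k) := by
  unfold branch; fun_prop

lemma sqrt_two_mul_I_ne_zero : (Real.sqrt 2 : ℂ) * Complex.I ≠ 0 := by
  simp [Complex.I_ne_zero]

lemma dist_branch (k : ℝ) (z w : ℂ) :
    dist (branch k z) (branch k w) = Real.sqrt 2 * dist z w := by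
  rw [dist_eq_norm, dist_eq_norm]
  have : branch k z - branch k w = (Real.sqrt 2 : ℂ) * Complex.I * (z - w) := by
    unfold branch; ring
  rw [this, norm_mul, norm_mul, Complex.norm_I, Complex.norm_real,
    Real.norm_of_nonneg (Real.sqrt_nonneg 2), mul_one]

/-- The inverse of `branch k`. -/
noncomputable def branchInv (k : ℝ) (w : ℂ) : ℂ :=
  ((Real.sqrt 2 : ℂ) * Complex.I)⁻¹ * (w - ((2 * Real.sqrt 2 * Real.pi * k : ℝ) : ℂ))

lemma branch_branchInv (k : ℝ) : Function.RightInverse (branchInv k) (branch k) := by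
  intro w
  unfold branch branchInv
  rw [mul_inv_cancel_left₀ sqrt_two_mul_I_ne_zero]; ring

lemma branchInv_branch (k : ℝ) : Function.LeftInverse (branchInv k) (branch k) := by
  intro w
  unfold branch branchInv
  rw [add_sub_cancel_right, inv_mul_cancel_left₀ sqrt_two_mul_I_ne_zero]

lemma continuous_branchInv (k : ℝ) : Continuous (branchInv k) := by
  unfold branchInv; fun_prop

lemma Fstep_of_mem_R1 {z : ℂ} (hz : z ∈ R1) : Fstep z = branch 1 z := by
  simp [Fstep, hz, branch]

lemma Fstep_of_mem_R2 {z : ℂ} (hz : z ∈ R2) : Fstep z = branch 2 z := by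
  have h : z ∉ R1 := fun h => by
    have h1 := h.2.2.2
    have h2 := hz.2.2.1
    linarith
  simp [Fstep, h, branch]; ring

lemma mem_R1_of_branch {z : ℂ} (h : branch 1 z ∈ R1 ∪ R2) : z ∈ R1 := by
  have hs : 0 < Real.sqrt 2 := by positivity
  have hs2 : Real.sqrt 2 * Real.sqrt 2 = 2 := Real.mul_self_sqrt (by norm_num)
  have hpi := Real.pi_pos
  simp only [Set.mem_union, R1, R2, Set.mem_ofPred_eq, branch_re, branch_im] at h ⊢
  refine ⟨?_, ?_, ?_, ?_⟩ <;> rcases h with ⟨h1, h2, h3, h4⟩ | ⟨h1, h2, h3, h4⟩ <;> nlinarith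

lemma mem_R2_of_branch {z : ℂ} (h : branch 2 z ∈ R1 ∪ R2) : z ∈ R2 := by
  have hs : 0 < Real.sqrt 2 := by positivity
  have hs2 : Real.sqrt 2 * Real.sqrt 2 = 2 := Real.mul_self_sqrt (by norm_num)
  have hpi := Real.pi_pos
  simp only [Set.mem_union, R1, R2, Set.mem_ofPred_eq, branch_re, branch_im] at h ⊢
  refine ⟨?_, ?_, ?_, ?_⟩ <;> rcases h with ⟨h1, h2, h3, h4⟩ | ⟨h1, h2, h3, h4⟩ <;> nlinarith

/-- Every point of the closed box is sent back into the closed box by some branch, and this branch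
agrees with `Fstep` at every point that it sends into `R1 ∪ R2`. -/
lemma exists_branch {p : ℂ} (hp : p ∈ closedBox) :
    ∃ k : ℝ, branch k p ∈ closedBox ∧
      ∀ z, branch k z ∈ R1 ∪ R2 → z ∈ R1 ∪ R2 ∧ Fstep z = branch k z := by
  have hs : 0 < Real.sqrt 2 := by positivity
  have hs2 : Real.sqrt 2 * Real.sqrt 2 = 2 := Real.mul_self_sqrt (by norm_num)
  have hpi := Real.pi_pos
  obtain ⟨h1, h2, h3, h4⟩ := hp
  rcases le_total p.im (2 * Real.pi) with h | h
  · refine ⟨1, ?_, fun z hz => ⟨Or.inl (mem_R1_of_branch hz),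
      Fstep_of_mem_R1 (mem_R1_of_branch hz)⟩⟩
    simp only [closedBox, Set.mem_ofPred_eq, branch_re, branch_im]
    refine ⟨?_, ?_, ?_, ?_⟩ <;> nlinarith
  · refine ⟨2, ?_, fun z hz => ⟨Or.inr (mem_R2_of_branch hz),
      Fstep_of_mem_R2 (mem_R2_of_branch hz)⟩⟩
    simp only [closedBox, Set.mem_ofPred_eq, branch_re, branch_im]
    refine ⟨?_, ?_, ?_, ?_⟩ <;> nlinarith

lemma R1_eq_reProdIm :
    R1 = Set.Ioo 0 (2 * Real.sqrt 2 * Real.pi) ×ℂ Set.Ioo 0 (2 * Real.pi) := by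
  ext z; simp [R1, Complex.mem_reProdIm, and_assoc]

lemma isConnected_R1 : IsConnected R1 := by
  have hs : 0 < Real.sqrt 2 := by positivity
  have hpi := Real.pi_pos
  refine ⟨⟨⟨Real.sqrt 2 * Real.pi, Real.pi⟩, ?_⟩, ?_⟩
  · have := mul_pos hs hpi
    refine ⟨?_, ?_, ?_, ?_⟩ <;> simp only <;> linarith
  · rw [R1_eq_reProdIm]
    exact (((convex_Ioo _ _).linear_preimage Complex.reLm).inter
      ((convex_Ioo _ _).linear_preimage Complex.imLm)).isPreconnected

lemma subset_closedBox : R1 ∪ R2 ⊆ closedBox := by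
  have hpi := Real.pi_pos
  rintro z (⟨h1, h2, h3, h4⟩ | ⟨h1, h2, h3, h4⟩) <;>
    refine ⟨?_, ?_, ?_, ?_⟩ <;> linarith

lemma dist_le_of_mem_closedBox {z w : ℂ} (hz : z ∈ closedBox) (hw : w ∈ closedBox) :
    dist z w ≤ 2 * Real.sqrt 2 * Real.pi + 4 * Real.pi := by
  obtain ⟨h1, h2, h3, h4⟩ := hz
  obtain ⟨g1, g2, g3, g4⟩ := hw
  rw [dist_eq_norm]
  refine (Complex.norm_le_abs_re_add_abs_im _).trans (add_le_add ?_ ?_)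
  · rw [Complex.sub_re, abs_le]; constructor <;> linarith
  · rw [Complex.sub_im, abs_le]; constructor <;> linarith

lemma subset_image_R1 : R1 ∪ R2 ⊆ Fstep '' R1 := by
  intro w hw
  have h : branchInv 1 w ∈ R1 := mem_R1_of_branch (by rwa [branch_branchInv])
  exact ⟨_, h, by rw [Fstep_of_mem_R1 h, branch_branchInv]⟩

/-- Near every point `p` of the closed box there is, for every `n`, an open connected set that
stays in `R1 ∪ R2` for `n` steps and is mapped onto `R1` by the last one; all its points lie
within `O(√2 ^ (-n))` of `p`. -/
lemma exists_cylinder (n : ℕ) : ∀ p ∈ closedBox, ∃ V : Set ℂ, IsOpen V ∧ IsConnected V ∧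
    (∀ j ≤ n, Fstep^[j] '' V ⊆ R1 ∪ R2) ∧ Fstep^[n] '' V = R1 ∧
    ∀ v ∈ V, Real.sqrt 2 ^ n * dist v p ≤ 2 * Real.sqrt 2 * Real.pi + 4 * Real.pi := by
  induction n with
  | zero =>
    intro p hp
    refine ⟨R1, isOpen_R1, isConnected_R1, fun j hj => ?_, by simp, fun v hv => ?_⟩
    · obtain rfl : j = 0 := by omega
      simp
    · simpa using dist_le_of_mem_closedBox (subset_closedBox (Or.inl hv)) hp
  | succ n ih =>
    intro p hp
    obtain ⟨k, hk, hF⟩ := exists_branch hp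
    obtain ⟨V, hVo, hVc, hVj, hVn, hVd⟩ := ih _ hk
    have hVsub : V ⊆ R1 ∪ R2 := by simpa using hVj 0 (Nat.zero_le _)
    have himg : Fstep '' (branch k ⁻¹' V) = V := by
      have hcongr : Set.EqOn Fstep (branch k) (branch k ⁻¹' V) :=
        fun z hz => (hF z (hVsub hz)).2
      rw [hcongr.image_eq]
      exact Set.image_preimage_eq V (branch_branchInv k).surjective
    have hiter (j : ℕ) : Fstep^[j + 1] '' (branch k ⁻¹' V) = Fstep^[j] '' V := by
      rw [Function.iterate_succ, Set.image_comp, himg]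
    refine ⟨branch k ⁻¹' V, hVo.preimage (continuous_branch k), ?_, ?_, ?_, ?_⟩
    · rw [← Set.image_eq_preimage_of_inverse (branch_branchInv k) (branchInv_branch k)]
      exact hVc.image _ (continuous_branchInv k).continuousOn
    · rintro (_ | j) hj
      · rw [Function.iterate_zero, Set.image_id]
        exact fun z hz => (hF z (hVsub hz)).1
      · rw [hiter]; exact hVj j (by omega)
    · rw [hiter, hVn]
    · intro v hv
      have := hVd _ hv
      rw [dist_branch] at this
      rwa [pow_succ, mul_assoc]

/-- **Step 1 of Theorem 1.2** (expansion property).  For every `p ∈ Ω = R₁ ∪ R₂` and every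
open neighborhood `U ⊆ Ω` of `p` there are a nonempty connected open subset `V ⊆ U` and an
integer `N ≥ 1` such that `F^j(V) ⊆ Ω` for `1 ≤ j ≤ N`, `F^N(V)` equals `R₁` or `R₂`, and
consequently `Ω ⊆ F^{N+1}(V)`. -/
theorem Fstep_eventually_covers (p : ℂ) (hp : p ∈ R1 ∪ R2)
    (U : Set ℂ) (hUopen : IsOpen U) (hUsub : U ⊆ R1 ∪ R2) (hpU : p ∈ U) :
    ∃ (V : Set ℂ) (N : ℕ),
      V ⊆ U ∧ V.Nonempty ∧ IsOpen V ∧ IsConnected V ∧ 1 ≤ N ∧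
      (∀ j, 1 ≤ j → j ≤ N → Fstep^[j] '' V ⊆ R1 ∪ R2) ∧
      (Fstep^[N] '' V = R1 ∨ Fstep^[N] '' V = R2) ∧
      R1 ∪ R2 ⊆ Fstep^[N + 1] '' V := by
  obtain ⟨ε, hε, hball⟩ := Metric.isOpen_iff.1 hUopen p hpU
  obtain ⟨n, hn⟩ := pow_unbounded_of_one_lt
    ((2 * Real.sqrt 2 * Real.pi + 4 * Real.pi) / ε) Real.one_lt_sqrt_two
  -- `n + 1` rather than `n`, because at least one step is required.
  obtain ⟨V, hVo, hVc, hVj, hVn, hVd⟩ := exists_cylinder (n + 1) p (subset_closedBox hp)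
  refine ⟨V, n + 1, fun v hv => hball ?_, hVc.nonempty, hVo, hVc, by omega,
    fun j _ hj => hVj j hj, Or.inl hVn, ?_⟩
  · have h1 := hVd v hv
    rw [div_lt_iff₀ hε] at hn
    have h2 : Real.sqrt 2 ^ n ≤ Real.sqrt 2 ^ (n + 1) :=
      pow_le_pow_right₀ Real.one_lt_sqrt_two.le (Nat.le_succ n)
    have h3 : 0 < Real.sqrt 2 ^ n := by positivity
    have h4 := mul_le_mul_of_nonneg_right h2 (dist_nonneg (x := v) (y := p))
    exact lt_of_mul_lt_mul_left (h4.trans_lt (h1.trans_lt hn)) h3.le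
  · rw [Function.iterate_succ', Set.image_comp, hVn]
    exact subset_image_R1
end

section
/- Let φ : ℂ^{m−1} × ℝ → ℝ be Lipschitz with constant c > 0 and let Ω = {(z, u + iv) ∈ ℂ^{m−1} × ℂ : u < φ(z, v)}. Let (α, β) ∈ ℂ^{m−1} × ℝ with ‖(α, β)‖ < 1/c. Then for every point (z_0, u_0 + i v_0) in the closure of Ω and every t > 0, the translated point (z_0, u_0 + i v_0) − t·(α, 1 + iβ) = (z_0 − tα, (u_0 − t) + i(v_0 − tβ)) lies in Ω. In particular, for each fixed t > 0 the affine holomorphic map H_{t,α,β}(z, w) = (z − tα, w − t(1 + iβ)) maps Ω into Ω. -/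
/-!
A point `(z, u + iv)` of the closure of `Ω` satisfies `u ≤ φ (z, v)` by continuity of `φ`.
Translating by `-t (α, 1 + iβ)` lowers `u` by exactly `t`, while the Lipschitz bound lets
`φ` drop by at most `c * t * ‖(α, β)‖ < t`; so the inequality becomes strict. The norm on
`EuclideanSpace ℂ (Fin n) × ℝ` enters only through its homogeneity.
-/

/-- **The translation property from the proof of Theorem 1.5.** Let `φ : ℂ^{m-1} × ℝ → ℝ`
be Lipschitz with constant `c > 0` and `Ω = {(z, u+iv) : u < φ(z, v)}`.  If
`‖(α, β)‖ < 1/c`, then translating any point of the closure of `Ω` by `−t·(α, 1+iβ)`,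
`t > 0`, lands in `Ω`; in particular each affine holomorphic map
`H_{t,α,β}(z, w) = (z − tα, w − t(1+iβ))` maps `Ω` into `Ω`. -/
theorem translation_into_lipschitz_subgraph {n : ℕ} (c : NNReal) (hc : 0 < c)
    (φ : EuclideanSpace ℂ (Fin n) × ℝ → ℝ) (hφ : LipschitzWith c φ)
    (α : EuclideanSpace ℂ (Fin n)) (β : ℝ) (hαβ : ‖(α, β)‖ < 1 / (c : ℝ)) :
    (∀ p ∈ closure {q : EuclideanSpace ℂ (Fin n) × ℂ | q.2.re < φ (q.1, q.2.im)},
      ∀ t : ℝ, 0 < t →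
        (p.1 - t • α, p.2 - (t : ℂ) * (1 + (β : ℂ) * Complex.I)) ∈
          {q : EuclideanSpace ℂ (Fin n) × ℂ | q.2.re < φ (q.1, q.2.im)}) ∧
    (∀ t : ℝ, 0 < t →
      (fun q : EuclideanSpace ℂ (Fin n) × ℂ =>
          (q.1 - t • α, q.2 - (t : ℂ) * (1 + (β : ℂ) * Complex.I))) ''
        {q | q.2.re < φ (q.1, q.2.im)} ⊆ {q | q.2.re < φ (q.1, q.2.im)}) := by
  have hc' : (0 : ℝ) < c := by exact_mod_cast hc
  have key : ∀ p ∈ closure {q : EuclideanSpace ℂ (Fin n) × ℂ | q.2.re < φ (q.1, q.2.im)},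
      ∀ t : ℝ, 0 < t →
        (p.1 - t • α, p.2 - (t : ℂ) * (1 + (β : ℂ) * Complex.I)) ∈
          {q : EuclideanSpace ℂ (Fin n) × ℂ | q.2.re < φ (q.1, q.2.im)} := by
    intro p hp t ht
    have hcont := hφ.continuous
    have hle : p.2.re ≤ φ (p.1, p.2.im) :=
      closure_lt_subset_le (f := fun q : EuclideanSpace ℂ (Fin n) × ℂ => q.2.re)
        (g := fun q => φ (q.1, q.2.im)) (by fun_prop) (by fun_prop) hp
    have hlip := hφ.dist_le_mul (p.1, p.2.im) ((p.1, p.2.im) - t • (α, β))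
    rw [dist_eq_norm (p.1, p.2.im), sub_sub_cancel, norm_smul, Real.norm_of_nonneg ht.le,
      Real.dist_eq] at hlip
    have hdrop : (c : ℝ) * (t * ‖(α, β)‖) < t := by
      rw [lt_div_iff₀ hc'] at hαβ
      nlinarith
    have habs := le_abs_self (φ (p.1, p.2.im) - φ ((p.1, p.2.im) - t • (α, β)))
    have heq : (p.1, p.2.im) - t • (α, β) = (p.1 - t • α, p.2.im - t * β) := rfl
    rw [heq] at hlip habs
    simp only [Set.mem_setOf_eq, Complex.sub_re, Complex.sub_im, Complex.re_ofReal_mul,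
      Complex.im_ofReal_mul, Complex.add_re, Complex.add_im, Complex.one_re, Complex.one_im,
      Complex.I_re, Complex.I_im, mul_zero, mul_one, add_zero, zero_add]
    linarith
  refine ⟨key, ?_⟩
  rintro t ht _ ⟨q, hq, rfl⟩
  exact key q (subset_closure hq) t ht
end

section
/- Let U ⊂ ℂ^m be a bounded domain and let F : U → U be a biholomorphic automorphism of U such that for some strictly increasing sequence of positive integers n_k, the iterates F^{n_k} converge locally uniformly on U to the identity map. Then F has no dense orbit: for every p ∈ U, the orbit {F^n(p) : n ≥ 0} is not dense in U (indeed its closure is nowhere dense in U). -/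
/-!
Holomorphic self-maps of a bounded open set `U` are equicontinuous at every point of `U`, by the
Schwarz lemma (`equicontinuous_selfMaps`).  In particular the iterates of `F` are equicontinuous,
and `F` is recurrent since `F^{n_k} → id`.

Let `C` be the closure of the orbit of `p`.  Equicontinuity and recurrence make every point of
`K = C ∩ closedBall p ρ` return to `ball p ρ` after a positive time, and by compactness this time
is bounded on `K` by some `J`.  Hence the orbit stays in the compact set `⋃ j ≤ J, F^j(K) ⊆ U`,
so `C` is a compact subset of `U` (`isCompact_closure_orbit`).

The set `C` is invariant under `F`, and under `F⁻¹` by recurrence.  If `C` has an interior point,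
then some `F^a(p)` is interior; the equicontinuous maps `F^a ∘ F^{-n}`, which preserve `C` in both
directions, carry points near any given `y ∈ C` into a neighbourhood of `F^a(p)`, so `C` is open.
A nonempty compact open subset of `ℂ^m` with `m ≥ 1` does not exist, so `C` has empty interior.
-/

open Set Filter Metric Topology

/-- All holomorphic self-maps of a bounded open set are equicontinuous at each of its points. -/
lemma equicontinuous_selfMaps {E : Type*} [NormedAddCommGroup E] [NormedSpace ℂ E] {U : Set E}
    (hUopen : IsOpen U) (hUbdd : Bornology.IsBounded U) {z : E} (hz : z ∈ U) {ε : ℝ}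
    (hε : 0 < ε) :
    ∃ δ > 0, ball z δ ⊆ U ∧ ∀ H : E → E, DifferentiableOn ℂ H U → MapsTo H U U →
      ∀ w ∈ ball z δ, dist (H w) (H z) < ε := by
  obtain ⟨r, hr, hrU⟩ := Metric.isOpen_iff.1 hUopen z hz
  obtain ⟨R, hR⟩ := Metric.isBounded_iff.1 hUbdd
  have hR0 : 0 ≤ R := dist_nonneg.trans (hR hz hz)
  refine ⟨min r (ε * r / (R + 1)), by positivity,
    (ball_subset_ball (min_le_left _ _)).trans hrU, fun H hH hHU w hw => ?_⟩
  have hwr : w ∈ ball z r := ball_subset_ball (min_le_left _ _) hw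
  have hw2 : dist w z < ε * r / (R + 1) := lt_of_lt_of_le hw (min_le_right _ _)
  have key : dist (H w) (H z) ≤ R / r * dist w z :=
    Complex.dist_le_div_mul_dist_of_mapsTo_ball (hH.mono hrU)
      (fun x hx => hR (hHU (hrU hx)) (hHU hz)) hwr
  rw [lt_div_iff₀ (by positivity)] at hw2
  refine key.trans_lt ?_
  rw [div_mul_eq_mul_div, div_lt_iff₀ hr]
  nlinarith [dist_nonneg (x := w) (y := z)]

lemma iterate_differentiableOn {E : Type*} [NormedAddCommGroup E] [NormedSpace ℂ E] {U : Set E}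
    {F : E → E} (hF : DifferentiableOn ℂ F U) (hFU : MapsTo F U U) (n : ℕ) :
    DifferentiableOn ℂ F^[n] U := by
  induction n with
  | zero => exact differentiableOn_id
  | succ n ih => exact ih.comp hF hFU

/-- A recurrent orbit of a map with equicontinuous iterates on an open subset `U` of a proper
metric space stays in a compact subset of `U`. -/
lemma isCompact_closure_orbit {E : Type*} [MetricSpace E] [ProperSpace E] {U : Set E}
    (hUopen : IsOpen U) {F : E → E} (hFU : MapsTo F U U) (hFc : ∀ j, ContinuousOn F^[j] U)
    (heq : ∀ z ∈ U, ∀ ε > 0, ∃ δ > 0, ∀ j, ∀ w ∈ ball z δ, dist (F^[j] w) (F^[j] z) < ε)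
    {n : ℕ → ℕ} (hmono : StrictMono n) {p : E} (hp : p ∈ U)
    (hrec : Tendsto (fun k => F^[n k] p) atTop (𝓝 p)) :
    IsCompact (closure (range fun k => F^[k] p)) ∧ closure (range fun k => F^[k] p) ⊆ U := by
  set O := range fun k => F^[k] p with hO
  obtain ⟨ρ, hρ, hρU⟩ := Metric.nhds_basis_closedBall.mem_iff.1 (hUopen.mem_nhds hp)
  set K := closedBall p ρ ∩ closure O with hK
  have hKc : IsCompact K := (isCompact_closedBall p ρ).inter_right isClosed_closure
  have hKU : K ⊆ U := inter_subset_left.trans hρU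
  have hret : ∀ y ∈ K, ∃ j, 0 < j ∧ F^[j] y ∈ ball p ρ := by
    intro y hy
    obtain ⟨δ, hδ, h⟩ := heq y (hKU hy) (ρ / 2) (half_pos hρ)
    obtain ⟨_, ⟨a, rfl⟩, ha⟩ := Metric.mem_closure_iff.1 hy.2 δ hδ
    obtain ⟨k, hk1, hk2⟩ := ((hrec.eventually (ball_mem_nhds p (half_pos hρ))).and
      (hmono.tendsto_atTop.eventually_gt_atTop a)).exists
    refine ⟨n k - a, by omega, ?_⟩
    have h1 := h (n k - a) (F^[a] p) (by rw [mem_ball, dist_comm]; exact ha)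
    rw [← Function.iterate_add_apply, Nat.sub_add_cancel hk2.le, dist_comm] at h1
    rw [mem_ball]
    linarith [dist_triangle (F^[n k - a] y) (F^[n k] p) p]
  -- By compactness of `K` the return times can be bounded.
  obtain ⟨T, hT⟩ := hKc.elim_finite_subcover
    (fun j : ℕ => if 0 < j then U ∩ F^[j] ⁻¹' ball p ρ else ∅)
    (fun j => by
      split_ifs
      · exact (hFc j).isOpen_inter_preimage hUopen isOpen_ball
      · exact isOpen_empty)
    (fun y hy => by
      obtain ⟨j, hj, hjy⟩ := hret y hy
      refine mem_iUnion.2 ⟨j, ?_⟩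
      rw [if_pos hj]
      exact ⟨hKU hy, hjy⟩)
  have hret' : ∀ y ∈ K, ∃ j, 0 < j ∧ j ≤ T.sup id ∧ F^[j] y ∈ ball p ρ := by
    intro y hy
    obtain ⟨j, hjT, hj⟩ := mem_iUnion₂.1 (hT hy)
    split_ifs at hj with h0
    · exact ⟨j, h0, Finset.le_sup (f := id) hjT, hj.2⟩
    · exact hj.elim
  set L := ⋃ j ∈ Finset.range (T.sup id + 1), F^[j] '' K with hL
  have hLc : IsCompact L := (Finset.range _).isCompact_biUnion fun j _ =>
    hKc.image_of_continuousOn ((hFc j).mono hKU)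
  have hLU : L ⊆ U := iUnion₂_subset fun j _ =>
    ((hFU.iterate j).mono_left hKU).image_subset
  have hOL : O ⊆ L := by
    classical
    rintro _ ⟨a, rfl⟩
    have h0 : F^[0] p ∈ K := ⟨mem_closedBall_self hρ.le, subset_closure ⟨0, rfl⟩⟩
    -- `s` is the time of the last visit to `K` up to time `a`.
    set s := Nat.findGreatest (fun i => F^[i] p ∈ K) a with hs
    have hsK : F^[s] p ∈ K :=
      Nat.findGreatest_spec (P := fun i => F^[i] p ∈ K) (Nat.zero_le a) h0
    have hsa : s ≤ a := Nat.findGreatest_le a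
    obtain ⟨j, hj0, hjT, hj⟩ := hret' _ hsK
    rw [← Function.iterate_add_apply] at hj
    have hlt : a < j + s := by
      by_contra! hle
      have : j + s ≤ s := Nat.le_findGreatest (P := fun i => F^[i] p ∈ K) hle
        ⟨ball_subset_closedBall hj, subset_closure ⟨_, rfl⟩⟩
      omega
    refine mem_iUnion₂.2 ⟨a - s, Finset.mem_range.2 (by omega), F^[s] p, hsK, ?_⟩
    rw [← Function.iterate_add_apply, Nat.sub_add_cancel hsa]
  have hCL : closure O ⊆ L := closure_minimal hOL hLc.isClosed
  exact ⟨hLc.of_isClosed_subset isClosed_closure hCL, hCL.trans hLU⟩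

/-- **The group-theoretic step in the proof of the Main Theorem.** Let `U ⊆ ℂ^m` (`m ≥ 1`)
be a bounded domain and `F` a biholomorphic automorphism of `U` (with holomorphic inverse
`G`) such that for some strictly increasing sequence `n_k` of positive integers the iterates
`F^{n_k}` converge locally uniformly on `U` to the identity.  Then no orbit of `F` is dense
in `U`; indeed the closure of every orbit is nowhere dense in `U`. -/
theorem automorphism_no_dense_orbit {m : ℕ} (hm : 0 < m)
    (U : Set (EuclideanSpace ℂ (Fin m)))
    (hUopen : IsOpen U) (hUconn : IsConnected U) (hUbdd : Bornology.IsBounded U)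
    (F G : EuclideanSpace ℂ (Fin m) → EuclideanSpace ℂ (Fin m))
    (hF : DifferentiableOn ℂ F U) (hFmaps : Set.MapsTo F U U)
    (hG : DifferentiableOn ℂ G U) (hGmaps : Set.MapsTo G U U)
    (hGF : ∀ z ∈ U, G (F z) = z) (hFG : ∀ z ∈ U, F (G z) = z)
    (n : ℕ → ℕ) (hmono : StrictMono n) (hpos : ∀ k, 0 < n k)
    (hconv : TendstoLocallyUniformlyOn (fun k => F^[n k]) id Filter.atTop U) :
    ∀ p ∈ U,
      ¬ (U ⊆ closure (Set.range fun k => F^[k] p)) ∧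
      interior (closure (Set.range fun k => F^[k] p) ∩ U) = ∅ := by
  have hFd := iterate_differentiableOn hF hFmaps
  have hGd := iterate_differentiableOn hG hGmaps
  have hGFi : ∀ a, ∀ z ∈ U, G^[a] (F^[a] z) = z := by
    intro a
    induction a with
    | zero => exact fun z _ => rfl
    | succ a ih =>
      intro z hz
      rw [Function.iterate_succ_apply' F, Function.iterate_succ_apply G,
        hGF _ (hFmaps.iterate a hz), ih z hz]
  have hFGi : ∀ a, ∀ z ∈ U, F^[a] (G^[a] z) = z := by
    intro a
    induction a with
    | zero => exact fun z _ => rfl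
    | succ a ih =>
      intro z hz
      rw [Function.iterate_succ_apply' G, Function.iterate_succ_apply F,
        hFG _ (hGmaps.iterate a hz), ih z hz]
  have hpt : ∀ y ∈ U, Tendsto (fun k => F^[n k] y) atTop (𝓝 y) :=
    fun y hy => hconv.tendsto_at hy
  intro p hp
  obtain ⟨hC, hCU⟩ := isCompact_closure_orbit hUopen hFmaps (fun j => (hFd j).continuousOn)
    (fun z hz ε hε => by
      obtain ⟨δ, hδ, -, h⟩ := equicontinuous_selfMaps hUopen hUbdd hz hε
      exact ⟨δ, hδ, fun j => h _ (hFd j) (hFmaps.iterate j)⟩) hmono hp (hpt p hp)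
  suffices hint : interior (closure (range fun k => F^[k] p) ∩ U) = ∅ by
    refine ⟨fun hsub => ?_, hint⟩
    rw [inter_eq_right.2 hsub, hUopen.interior_eq] at hint
    exact (hint ▸ hp : p ∈ (∅ : Set _))
  rw [inter_eq_left.2 hCU]
  set C := closure (range fun k => F^[k] p) with hCdef
  have hOC : ∀ a, F^[a] p ∈ C := fun a => subset_closure ⟨a, rfl⟩
  have hFC : MapsTo F C C := by
    have : MapsTo F (range fun k => F^[k] p) (range fun k => F^[k] p) := by
      rintro _ ⟨a, rfl⟩
      exact ⟨a + 1, Function.iterate_succ_apply' F a p⟩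
    exact this.closure_of_continuousOn (hF.continuousOn.mono hCU)
  have hGC : MapsTo G C C := by
    intro y hy
    have hyU := hCU hy
    -- `F⁻¹ y` is the limit of `F^{n_k - 1} y`.
    have ht : Tendsto (fun k => G (F^[n k] y)) atTop (𝓝 (G y)) :=
      ((hG.continuousOn.continuousAt (hUopen.mem_nhds hyU)).tendsto).comp (hpt y hyU)
    refine isClosed_closure.mem_of_tendsto ht (Eventually.of_forall fun k => ?_)
    obtain ⟨b, hb⟩ := Nat.exists_eq_succ_of_ne_zero (hpos k).ne'
    rw [hb, Function.iterate_succ_apply', hGF _ (hFmaps.iterate b hyU)]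
    exact hFC.iterate b hy
  by_contra hne
  obtain ⟨q, hq⟩ := nonempty_iff_ne_empty.2 hne
  obtain ⟨_, hx, a, rfl⟩ := mem_closure_iff.1 (interior_subset hq) _ isOpen_interior hq
  obtain ⟨ε, hε, hball⟩ := Metric.isOpen_iff.1 isOpen_interior _ hx
  have hopen : IsOpen C := by
    rw [isOpen_iff_mem_nhds]
    intro y hy
    have hyU := hCU hy
    obtain ⟨δ, hδ, hδU, hH⟩ := equicontinuous_selfMaps hUopen hUbdd hyU hε
    obtain ⟨_, ⟨b, rfl⟩, hb⟩ := Metric.mem_closure_iff.1 hy δ hδ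
    -- `F^a ∘ G^b` sends the nearby orbit point `F^b p` to `F^a p`.
    have hd : DifferentiableOn ℂ (F^[a] ∘ G^[b]) U := (hFd a).comp (hGd b) (hGmaps.iterate b)
    have h1 := hH (F^[a] ∘ G^[b]) hd ((hFmaps.iterate a).comp (hGmaps.iterate b)) (F^[b] p)
      (by rw [mem_ball, dist_comm]; exact hb)
    rw [Function.comp_apply, Function.comp_apply, hGFi b p hp, dist_comm] at h1
    have h2 : (F^[a] ∘ G^[b]) y ∈ interior C := hball h1
    filter_upwards [hUopen.mem_nhds hyU, (hd.continuousOn.continuousAt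
      (hUopen.mem_nhds hyU)).preimage_mem_nhds (isOpen_interior.mem_nhds h2)] with w hwU hw
    have h3 : F^[b] (G^[a] (F^[a] (G^[b] w))) ∈ C :=
      hFC.iterate b (hGC.iterate a (interior_subset hw))
    rwa [hGFi a _ (hGmaps.iterate b hwU), hFGi b w hwU] at h3
  have : Nonempty (Fin m) := ⟨⟨0, hm⟩⟩
  have huniv : C = univ := IsClopen.eq_univ ⟨isClosed_closure, hopen⟩ ⟨_, hOC 0⟩
  have : NoncompactSpace (EuclideanSpace ℂ (Fin m)) := NormedSpace.noncompactSpace ℂ _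
  exact noncompact_univ _ (huniv ▸ hC)
end

section
/- Let Ω ⊂ ℂ^m be a bounded domain satisfying Ω = int(cl(Ω)), and let F : Ω → ℂ^m be a holomorphic map with discrete fibers (for every q ∈ ℂ^m, the preimage F^{−1}(q) is a discrete subset of Ω). Then F has no dense orbit: there do not exist a nonempty open subset V ⊂ Ω and a sequence {p_n}_{n≥0} ⊂ Ω with F(p_n) = p_{n+1} for all n such that {p_n} ∩ V is dense in V. -/
/-!
Suppose the orbit `p` is dense in `V`, and let `W = int (cl {p n})`. Then `W` is open, bounded and
contains `V`, and `W ⊆ int (cl Ω) = Ω`. By continuity `F` maps `W` into `cl {p n}`. A holomorphic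
map with discrete fibers between spaces of the same dimension is open
(`image_mem_nhds_of_discrete_fibers`), so `F` maps `W` into `W`.

A holomorphic self-map of a bounded open set has equicontinuous iterates by the Schwarz lemma
(`iterate_equicontinuous`). If an orbit is dense in `W`, each point of a small closed ball `K ⊆ W`
around an orbit point returns to `K`, and by compactness it does so in bounded time. Hence the orbit
stays in a finite union of the compact sets `F^[i] '' K ⊆ W`, and `W` is compact
(`no_dense_orbit_of_mapsTo`). This is absurd for a nonempty open subset of `ℂ^m` with `m ≥ 1`.

The openness of `F` is obtained from Hausdorff dimension. The Jacobian determinant vanishes on no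
nonempty open set (`exists_frequently_eq_of_det_eq_zero`), so its zero set has real codimension at
least two (`dimH_zeroSet_le`), and so has the set of critical values. Such a set does not separate a
ball (`not_separated_of_dimH_lt`). Near `F x₀` the image of a small closed ball around `x₀` is closed,
and it is open away from the critical values, hence it is everything.
-/

open Metric Set Filter Topology MeasureTheory Module

/-! ### Regularity of holomorphic maps of several variables -/

/-- Directional derivatives of a holomorphic map are holomorphic: differentiate Cauchy's formula
`∂ᵥ f(x) = (2πi)⁻¹ ∮ ζ⁻² f(x + ζ v) dζ` under the integral sign. -/
theorem differentiableOn_fderiv_apply {E G : Type*} [NormedAddCommGroup E] [NormedSpace ℂ E]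
    [FiniteDimensional ℂ E] [NormedAddCommGroup G] [NormedSpace ℂ G] [FiniteDimensional ℂ G]
    {f : E → G} {U : Set E} (hU : IsOpen U) (hf : DifferentiableOn ℂ f U) (v : E) :
    DifferentiableOn ℂ (fun x ↦ fderiv ℂ f x v) U := by
  intro x₀ hx₀
  apply DifferentiableAt.differentiableWithinAt
  have : ProperSpace E := FiniteDimensional.proper ℂ E
  have : CompleteSpace G := FiniteDimensional.complete ℂ G
  borelize E
  borelize G
  obtain ⟨R, hR, hRU⟩ : ∃ R > 0, closedBall x₀ (4 * R) ⊆ U := by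
    obtain ⟨R, hR, h⟩ := Metric.nhds_basis_closedBall.mem_iff.1 (hU.mem_nhds hx₀)
    exact ⟨R / 4, by positivity, by convert h using 2; ring⟩
  obtain ⟨M, hM⟩ := ((isCompact_closedBall x₀ (4 * R)).image_of_continuousOn
    (hf.continuousOn.mono hRU)).isBounded.exists_norm_le
  have hM' : ∀ x ∈ closedBall x₀ (4 * R), ‖f x‖ ≤ M := fun x hx ↦ hM _ (mem_image_of_mem _ hx)
  -- the Cauchy estimate bounds the derivative on a smaller ball
  have hbd : ∀ x ∈ ball x₀ (2 * R), ‖fderiv ℂ f x‖ ≤ 2 * M / R := by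
    intro x hx
    have hsub : ball x R ⊆ closedBall x₀ (4 * R) := by
      refine ball_subset_closedBall.trans (closedBall_subset_closedBall' ?_)
      have := mem_ball.1 hx
      linarith
    refine Complex.norm_fderiv_le_div_of_mapsTo_ball (hf.mono (hsub.trans hRU)) ?_ hR
    intro y hy
    rw [mem_closedBall, dist_eq_norm]
    have h1 := hM' y (hsub hy)
    have h2 := hM' x (hsub (mem_ball_self hR))
    linarith [norm_sub_le (f y) (f x)]
  -- it suffices to differentiate in a short direction
  obtain ⟨c, hc, hcv⟩ : ∃ c : ℂ, c ≠ 0 ∧ ‖c • v‖ < R := by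
    refine ⟨((R / (‖v‖ + 1) : ℝ) : ℂ), ?_, ?_⟩
    · have : R / (‖v‖ + 1) ≠ 0 := by positivity
      exact_mod_cast this
    · rw [norm_smul, Complex.norm_real, Real.norm_of_nonneg (by positivity), div_mul_eq_mul_div,
        div_lt_iff₀ (by positivity)]
      nlinarith [norm_nonneg v]
  set w := c • v with hw
  suffices h : DifferentiableAt ℂ (fun x ↦ fderiv ℂ f x w) x₀ by
    have : (fun x ↦ fderiv ℂ f x v) = fun x ↦ c⁻¹ • fderiv ℂ f x w := by
      funext x
      simp [hw, smul_smul, hc]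
    rw [this]
    exact h.const_smul _
  have hmem : ∀ x ∈ ball x₀ R, ∀ ζ : ℂ, ‖ζ‖ ≤ 1 → x + ζ • w ∈ ball x₀ (2 * R) := by
    intro x hx ζ hζ
    rw [mem_ball, dist_eq_norm] at hx ⊢
    have h1 : ‖ζ • w‖ ≤ ‖w‖ := by
      rw [norm_smul]; exact mul_le_of_le_one_left (norm_nonneg _) hζ
    calc ‖x + ζ • w - x₀‖ = ‖(x - x₀) + ζ • w‖ := by congr 1; abel
      _ ≤ ‖x - x₀‖ + ‖ζ • w‖ := norm_add_le _ _
      _ < 2 * R := by linarith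
  have hdiffU : ∀ x ∈ ball x₀ (2 * R), DifferentiableAt ℂ f x := fun x hx ↦
    hf.differentiableAt (hU.mem_nhds (hRU (ball_subset_closedBall
      (ball_subset_ball (by linarith) hx))))
  have hcauchy : ∀ x ∈ ball x₀ R, fderiv ℂ f x w =
      (2 * Real.pi * Complex.I : ℂ)⁻¹ • ∮ ζ in C(0, 1), (1 / (ζ - 0) ^ 2) • f (x + ζ • w) := by
    intro x hx
    have hd : DifferentiableOn ℂ (fun ζ : ℂ ↦ f (x + ζ • w)) (closedBall 0 1) := by
      intro ζ hζ
      have := hdiffU _ (hmem x hx ζ (by simpa using hζ))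
      exact (DifferentiableAt.comp ζ this (by fun_prop)).differentiableWithinAt
    have h := hd.deriv_eq_smul_circleIntegral one_pos
    rw [h, smul_smul, inv_mul_cancel₀ Complex.two_pi_I_ne_zero, one_smul]
    have h1 : HasFDerivAt f (fderiv ℂ f x) (x + (0 : ℂ) • w) := by
      simpa using (hdiffU x (ball_subset_ball (by linarith) hx)).hasFDerivAt
    have h2 : HasDerivAt (fun ζ : ℂ ↦ x + ζ • w) w 0 := by
      simpa using ((hasDerivAt_id (0 : ℂ)).smul_const w).const_add x
    exact (h1.comp_hasDerivAt (0 : ℂ) h2).deriv.symm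
  have hcm : ∀ θ : ℝ, ‖circleMap 0 1 θ‖ ≤ 1 := fun θ ↦ by simp
  have hcont : ∀ x ∈ ball x₀ R, Continuous fun θ : ℝ ↦ deriv (circleMap 0 1) θ •
      ((1 / (circleMap 0 1 θ - 0) ^ 2) • f (x + circleMap 0 1 θ • w)) := by
    intro x hx
    rw [continuous_iff_continuousAt]
    intro θ
    have h1 : ContinuousAt (fun θ : ℝ ↦ f (x + circleMap 0 1 θ • w)) θ := by
      refine ContinuousAt.comp (f := fun θ : ℝ ↦ x + circleMap 0 1 θ • w)
        (hdiffU _ (hmem x hx _ (hcm θ))).continuousAt ?_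
      fun_prop
    have h2 : ContinuousAt (fun θ : ℝ ↦ (1 / (circleMap 0 1 θ - 0) ^ 2)) θ := by
      refine ContinuousAt.div (by fun_prop) (by fun_prop) ?_
      simp [circleMap]
    simp only [deriv_circleMap]
    exact (by fun_prop : ContinuousAt (fun θ : ℝ ↦ circleMap 0 1 θ * Complex.I) θ).smul (h2.smul h1)
  refine DifferentiableAt.congr_of_eventuallyEq ?_
    (Filter.eventuallyEq_of_mem (ball_mem_nhds x₀ hR) hcauchy)
  refine DifferentiableAt.const_smul ?_ _
  refine (intervalIntegral.hasFDerivAt_integral_of_dominated_of_fderiv_le (𝕜 := ℂ)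
    (F := fun x θ ↦ deriv (circleMap 0 1) θ •
      ((1 / (circleMap 0 1 θ - 0) ^ 2) • f (x + circleMap 0 1 θ • w)))
    (F' := fun x θ ↦ deriv (circleMap 0 1) θ •
      ((1 / (circleMap 0 1 θ - 0) ^ 2) • fderiv ℂ f (x + circleMap 0 1 θ • w)))
    (bound := fun _ ↦ 2 * M / R)
    (ball_mem_nhds x₀ hR) ?_ ?_ ?_ ?_ ?_ ?_).differentiableAt
  · filter_upwards [ball_mem_nhds x₀ hR] with x hx
    exact (hcont x hx).aestronglyMeasurable
  · exact (hcont x₀ (mem_ball_self hR)).intervalIntegrable _ _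
  · have h5 : Measurable fun θ : ℝ ↦ fderiv ℂ f (x₀ + circleMap 0 1 θ • w) :=
      (measurable_fderiv ℂ f).comp (by fun_prop : Continuous fun θ : ℝ ↦
        x₀ + circleMap 0 1 θ • w).measurable
    have : FiniteDimensional ℂ (E →L[ℂ] G) := inferInstance
    have : ProperSpace (E →L[ℂ] G) := FiniteDimensional.proper ℂ _
    have h3 : Measurable fun θ : ℝ ↦ deriv (circleMap 0 1) θ := measurable_deriv _
    have h4 : Measurable fun θ : ℝ ↦ (1 / (circleMap 0 1 θ - 0) ^ 2) := by
      have : Measurable fun θ : ℝ ↦ circleMap 0 1 θ :=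
        (by fun_prop : Continuous fun θ : ℝ ↦ circleMap 0 1 θ).measurable
      fun_prop
    exact (h3.smul (h4.smul h5)).aestronglyMeasurable
  · refine Eventually.of_forall fun θ _ x hx ↦ ?_
    simpa [norm_smul] using hbd _ (hmem x hx _ (hcm θ))
  · simp
  · refine Eventually.of_forall fun θ _ x hx ↦ ?_
    refine HasFDerivAt.const_smul (HasFDerivAt.const_smul ?_ _) _
    have := (hdiffU _ (hmem x hx _ (hcm θ))).hasFDerivAt
    exact (hasFDerivAt_comp_add_right _).2 this

theorem contDiffOn_one_of_differentiableOn {E G : Type*} [NormedAddCommGroup E] [NormedSpace ℂ E]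
    [FiniteDimensional ℂ E] [NormedAddCommGroup G] [NormedSpace ℂ G] [FiniteDimensional ℂ G]
    {f : E → G} {U : Set E} (hU : IsOpen U) (hf : DifferentiableOn ℂ f U) :
    ContDiffOn ℂ 1 f U := by
  have : ContDiffOn ℂ (0 + 1) f U := by
    rw [contDiffOn_succ_iff_fderiv_of_isOpen hU]
    refine ⟨hf, by simp, contDiffOn_clm_apply.2 fun v ↦ contDiffOn_zero.2 ?_⟩
    exact (differentiableOn_fderiv_apply hU hf v).continuousOn
  simpa using this

theorem differentiableOn_fderiv {E G : Type*} [NormedAddCommGroup E] [NormedSpace ℂ E]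
    [FiniteDimensional ℂ E] [NormedAddCommGroup G] [NormedSpace ℂ G] [FiniteDimensional ℂ G]
    {f : E → G} {U : Set E} (hU : IsOpen U) (hf : DifferentiableOn ℂ f U) :
    DifferentiableOn ℂ (fderiv ℂ f) U :=
  (contDiffOn_clm_apply.2 fun v ↦ contDiffOn_one_of_differentiableOn hU
    (differentiableOn_fderiv_apply hU hf v)).differentiableOn one_ne_zero

theorem hasStrictFDerivAt_of_differentiableOn {E G : Type*} [NormedAddCommGroup E]
    [NormedSpace ℂ E] [FiniteDimensional ℂ E] [NormedAddCommGroup G] [NormedSpace ℂ G]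
    [FiniteDimensional ℂ G] {f : E → G} {U : Set E} (hU : IsOpen U)
    (hf : DifferentiableOn ℂ f U) {x : E} (hx : x ∈ U) :
    HasStrictFDerivAt f (fderiv ℂ f x) x :=
  ((contDiffOn_one_of_differentiableOn hU hf).contDiffAt (hU.mem_nhds hx)).hasStrictFDerivAt
    one_ne_zero

/-! ### Nonvanishing of the Jacobian, and regular zero sets -/

/-- An endomorphism can be made invertible by adding one whose rank is at most the dimension
of the kernel: send the kernel isomorphically onto a complement of the range. -/
theorem exists_complementing_endomorphism {E : Type*} [AddCommGroup E] [Module ℂ E]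
    [FiniteDimensional ℂ E] (L : E →ₗ[ℂ] E) :
    ∃ N : E →ₗ[ℂ] E, Function.Injective (L + N) ∧
      finrank ℂ (LinearMap.range N) ≤ finrank ℂ (LinearMap.ker L) := by
  obtain ⟨C, hC⟩ := Submodule.exists_isCompl (LinearMap.ker L)
  obtain ⟨D, hD⟩ := Submodule.exists_isCompl (LinearMap.range L)
  have hfin : finrank ℂ (LinearMap.ker L) = finrank ℂ D := by
    have h1 := LinearMap.finrank_range_add_finrank_ker L
    have h2 := Submodule.finrank_add_eq_of_isCompl hD
    omega
  let e : LinearMap.ker L ≃ₗ[ℂ] D := LinearEquiv.ofFinrankEq _ _ hfin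
  let P : E →ₗ[ℂ] LinearMap.ker L := Submodule.projectionOnto _ _ hC
  refine ⟨D.subtype ∘ₗ e.toLinearMap ∘ₗ P, ?_, ?_⟩
  · rw [← LinearMap.ker_eq_bot, LinearMap.ker_eq_bot']
    intro x hx
    have hx' : L x = -(e (P x) : E) := by
      simpa [add_eq_zero_iff_eq_neg] using hx
    have h0 : L x = 0 := by
      have h1 : L x ∈ D := by rw [hx']; exact D.neg_mem (e (P x)).2
      exact (Submodule.disjoint_def.1 hD.disjoint) _ (LinearMap.mem_range_self L x) h1
    have h2 : e (P x) = 0 := by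
      rw [h0] at hx'
      exact Subtype.ext (by simpa using hx'.symm)
    have h3 : P x = 0 := by simpa using h2
    have h4 : P x = (⟨x, h0⟩ : LinearMap.ker L) :=
      Submodule.projectionOnto_apply_left hC ⟨x, h0⟩
    rw [h3] at h4
    exact (congrArg Subtype.val h4).symm
  · rw [hfin]
    refine Submodule.finrank_mono ?_
    rintro _ ⟨x, rfl⟩
    exact (e (P x)).2

/-- If the Jacobian determinant vanishes identically on a nonempty open set, some fiber has a
non-isolated point. At a point of maximal rank there is a nonvanishing `C¹` vector field tangent to
the kernel of the derivative, and `F` is constant along its integral curves. -/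
theorem exists_frequently_eq_of_det_eq_zero {E : Type*} [NormedAddCommGroup E]
    [NormedSpace ℂ E] [FiniteDimensional ℂ E] {F : E → E} {O : Set E} (hO : IsOpen O)
    (hne : O.Nonempty) (hF : DifferentiableOn ℂ F O)
    (hdet : ∀ x ∈ O, LinearMap.det (fderiv ℂ F x : E →ₗ[ℂ] E) = 0) :
    ∃ x ∈ O, ∃ᶠ y in 𝓝[≠] x, F y = F x := by
  have : CompleteSpace E := FiniteDimensional.complete ℂ E
  obtain ⟨x₀, hx₀, hmin⟩ := (measure fun x ↦ finrank ℂ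
    (LinearMap.ker (fderiv ℂ F x : E →ₗ[ℂ] E))).wf.has_min O hne
  refine ⟨x₀, hx₀, ?_⟩
  obtain ⟨N, hinj, hrank⟩ := exists_complementing_endomorphism (fderiv ℂ F x₀ : E →ₗ[ℂ] E)
  obtain ⟨k, hk, hk0⟩ := (Submodule.ne_bot_iff _).1 (LinearMap.bot_lt_ker_of_det_eq_zero
    (hdet x₀ hx₀)).ne'
  let N' : E →L[ℂ] E := LinearMap.toContinuousLinearMap N
  let M : E → (E →L[ℂ] E) := fun x ↦ fderiv ℂ F x + N'
  let e₀ : E ≃L[ℂ] E := (LinearEquiv.ofInjectiveEndo _ hinj).toContinuousLinearEquiv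
  have he₀ : (e₀ : E →L[ℂ] E) = M x₀ := by
    ext x
    rfl
  have hM : ContDiffAt ℂ 1 M x₀ :=
    ((contDiffOn_one_of_differentiableOn hO (differentiableOn_fderiv hO hF)).contDiffAt
      (hO.mem_nhds hx₀)).add contDiffAt_const
  let v : E → E := fun x ↦ (M x).inverse (N k)
  have hv : ContDiffAt ℝ 1 v x₀ := by
    refine ContDiffAt.restrict_scalars (𝕜' := ℂ) ℝ ?_
    refine ContDiffAt.clm_apply ?_ contDiffAt_const
    refine ContDiffAt.comp (g := ContinuousLinearMap.inverse) x₀ ?_ hM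
    rw [← he₀]
    exact contDiffAt_map_inverse e₀
  -- near `x₀` the field `v` lies in the kernel of the derivative, because `M x` maps that kernel
  -- isomorphically onto the range of `N`
  have hker : ∀ᶠ x in 𝓝 x₀, x ∈ O ∧ fderiv ℂ F x (v x) = 0 := by
    have h1 : ∀ᶠ x in 𝓝 x₀, M x ∈ range ((↑) : (E ≃L[ℂ] E) → E →L[ℂ] E) := by
      refine hM.continuousAt.eventually_mem ?_
      rw [← he₀]
      exact ContinuousLinearEquiv.nhds e₀
    filter_upwards [h1, hO.mem_nhds hx₀] with x ⟨e, he⟩ hx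
    refine ⟨hx, ?_⟩
    have hle : finrank ℂ (LinearMap.ker (fderiv ℂ F x₀ : E →ₗ[ℂ] E)) ≤
        finrank ℂ (LinearMap.ker (fderiv ℂ F x : E →ₗ[ℂ] E)) := not_lt.1 (hmin x hx)
    have hMx : ∀ y, e y = fderiv ℂ F x y + N y := fun y ↦ by
      change (e : E →L[ℂ] E) y = _
      rw [he]; rfl
    have hmap : Submodule.map (e.toLinearEquiv : E →ₗ[ℂ] E)
        (LinearMap.ker (fderiv ℂ F x : E →ₗ[ℂ] E)) = LinearMap.range N := by
      refine Submodule.eq_of_le_of_finrank_le ?_ ?_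
      · rintro _ ⟨y, hy, rfl⟩
        have hy' : fderiv ℂ F x y = 0 := hy
        refine ⟨y, ?_⟩
        change N y = e y
        rw [hMx, hy', zero_add]
      · rw [LinearEquiv.finrank_map_eq]
        exact hrank.trans hle
    obtain ⟨y, hy, hyk⟩ : N k ∈ Submodule.map (e.toLinearEquiv : E →ₗ[ℂ] E)
        (LinearMap.ker (fderiv ℂ F x : E →ₗ[ℂ] E)) := by
      rw [hmap]; exact LinearMap.mem_range_self N k
    have : v x = y := by
      change (M x).inverse (N k) = y
      rw [← he, ContinuousLinearMap.inverse_equiv, ← hyk]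
      exact e.symm_apply_apply y
    rw [this]
    exact hy
  have hvx₀ : v x₀ = k := by
    have : N k = e₀ k := by
      change N k = fderiv ℂ F x₀ k + N k
      have hk' : fderiv ℂ F x₀ k = 0 := hk
      rw [hk', zero_add]
    change (M x₀).inverse (N k) = k
    rw [← he₀, ContinuousLinearMap.inverse_equiv, this]
    exact e₀.symm_apply_apply k
  obtain ⟨α, hα0, ε, hε, hα⟩ :=
    hv.exists_forall_mem_closedBall_exists_eq_forall_mem_Ioo_hasDerivAt₀ 0
  have hα' : HasDerivAt α k 0 := by
    have := hα 0 (by constructor <;> linarith)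
    rwa [hα0, hvx₀] at this
  have hαt : Tendsto α (𝓝 0) (𝓝 x₀) := by
    have := hα'.continuousAt.tendsto
    rwa [hα0] at this
  obtain ⟨δ, hδ, hδ'⟩ := Metric.eventually_nhds_iff_ball.1
    ((hαt.eventually hker).and (Ioo_mem_nhds (by linarith : 0 - ε < 0) (by linarith : 0 < 0 + ε)))
  have hder : ∀ t ∈ ball (0 : ℝ) δ, HasDerivAt (fun t ↦ F (α t)) 0 t := by
    intro t ht
    obtain ⟨⟨h1, h2⟩, h3⟩ := hδ' t ht
    have h4 : HasFDerivAt F ((fderiv ℂ F (α t)).restrictScalars ℝ) (α t) :=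
      (hF.differentiableAt (hO.mem_nhds h1)).hasFDerivAt.restrictScalars ℝ
    have := h4.comp_hasDerivAt t (hα t h3)
    rw [ContinuousLinearMap.coe_restrictScalars', h2] at this
    exact this
  have hconst : ∀ t ∈ ball (0 : ℝ) δ, F (α t) = F x₀ := by
    intro t ht
    rw [← hα0]
    exact isOpen_ball.is_const_of_deriv_eq_zero (convex_ball (0 : ℝ) δ).isPreconnected
      (fun t ht ↦ (hder t ht).differentiableAt.differentiableWithinAt)
      (fun t ht ↦ (hder t ht).deriv) ht (mem_ball_self hδ)
  have hT : Tendsto α (𝓝[≠] 0) (𝓝[≠] x₀) :=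
    tendsto_nhdsWithin_of_tendsto_nhds_of_eventually_within _
      (hαt.mono_left nhdsWithin_le_nhds) (hα'.eventually_ne hk0)
  refine hT.frequently (Eventually.frequently ?_)
  exact Filter.Eventually.filter_mono nhdsWithin_le_nhds
    (Filter.eventually_of_mem (ball_mem_nhds 0 hδ) hconst)

/-- Near a regular point, the zero set of `h` has real codimension at least two: the projection along
a vector transversal to `ker h'` is antilipschitz on the zero set, with values in `ker h'`. -/
theorem exists_mem_nhdsWithin_dimH_le {E : Type*} [NormedAddCommGroup E]
    [NormedSpace ℂ E] [FiniteDimensional ℂ E] {h : E → ℂ} {h' : E →L[ℂ] ℂ} {x : E}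
    (hh : HasStrictFDerivAt h h' x) (h'0 : h' ≠ 0) {S : Set E} (hS : ∀ y ∈ S, h y = 0) :
    ∃ t ∈ 𝓝[S] x, dimH t ≤ ((2 * (finrank ℂ E - 1) : ℕ) : ENNReal) := by
  obtain ⟨w, hw⟩ : ∃ w, h' w = 1 := by
    obtain ⟨u, hu⟩ := DFunLike.ne_iff.1 h'0
    exact ⟨(h' u)⁻¹ • u, by simpa using inv_mul_cancel₀ hu⟩
  have hc : (0 : NNReal) < (2 * (‖w‖₊ + 1))⁻¹ := by positivity
  obtain ⟨s, hs, happ⟩ := hh.approximates_deriv_on_nhds (Or.inr hc)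
  refine ⟨s ∩ S, inter_mem (mem_nhdsWithin_of_mem_nhds hs) self_mem_nhdsWithin, ?_⟩
  let K := LinearMap.ker (h' : E →ₗ[ℂ] ℂ)
  let π : (s ∩ S : Set E) → K := fun y ↦ ⟨(y : E) - h' y • w, by simp [K, hw]⟩
  have hπ : AntilipschitzWith 2 π := by
    refine AntilipschitzWith.of_le_mul_dist fun y z ↦ ?_
    have h1 := happ y.1 y.2.1 z.1 z.2.1
    rw [hS _ y.2.2, hS _ z.2.2] at h1
    simp only [sub_self, zero_sub, norm_neg] at h1
    rw [Subtype.dist_eq, Subtype.dist_eq, dist_eq_norm, dist_eq_norm]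
    set d : E := (y : E) - z with hd
    have h2 : (π y : E) - π z = d - h' d • w := by
      simp only [π, hd, map_sub, sub_smul]; abel
    rw [h2]
    have h3 : ‖h' d • w‖ ≤ ‖d‖ / 2 := by
      rw [norm_smul]
      have h4 : ((2 * (‖w‖₊ + 1))⁻¹ : NNReal) = (2 * (‖w‖ + 1))⁻¹ := by simp
      rw [h4] at h1
      have hw0 := norm_nonneg w
      calc ‖h' d‖ * ‖w‖ ≤ ((2 * (‖w‖ + 1))⁻¹ * ‖d‖) * (‖w‖ + 1) := by gcongr; linarith
        _ = ‖d‖ / 2 := by field_simp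
    have h5 := norm_sub_norm_le d (h' d • w)
    push_cast
    linarith
  have h1 : dimH (s ∩ S) = dimH (univ : Set (s ∩ S : Set E)) := by
    rw [← isometry_subtype_coe.dimH_image univ, image_univ, Subtype.range_coe]
  have h2 : dimH (univ : Set (s ∩ S : Set E)) ≤ dimH (univ : Set K) := by
    simpa using hπ.dimH_preimage_le univ
  have h3 : finrank ℂ K = finrank ℂ E - 1 := by
    have h4 := LinearMap.finrank_range_add_finrank_ker (h' : E →ₗ[ℂ] ℂ)
    have h5 : LinearMap.range (h' : E →ₗ[ℂ] ℂ) = ⊤ :=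
      LinearMap.range_eq_top.2 fun c ↦ ⟨c • w, by simp [hw]⟩
    rw [h5, finrank_top, finrank_self] at h4
    change 1 + finrank ℂ K = _ at h4
    omega
  rw [h1]
  refine h2.trans ?_
  rw [Real.dimH_univ_eq_finrank, finrank_real_of_complex, h3]

/-! ### Hausdorff dimension of zero sets, and separation -/

/-- The iterated directional derivative `∂ᵥʲ g`. -/
noncomputable def dirDeriv {E : Type*} [NormedAddCommGroup E] [NormedSpace ℂ E]
    (v : E) (g : E → ℂ) : ℕ → E → ℂ
  | 0 => g
  | j + 1 => fun x ↦ fderiv ℂ (dirDeriv v g j) x v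

theorem differentiableOn_dirDeriv {E : Type*} [NormedAddCommGroup E] [NormedSpace ℂ E]
    [FiniteDimensional ℂ E] {g : E → ℂ} {U : Set E} (hU : IsOpen U)
    (hg : DifferentiableOn ℂ g U) (v : E) (j : ℕ) : DifferentiableOn ℂ (dirDeriv v g j) U := by
  induction j with
  | zero => exact hg
  | succ j ih => exact differentiableOn_fderiv_apply hU ih v

/-- Taylor expansion on the complex line `x + ℂ v`. -/
theorem eq_zero_of_dirDeriv_eq_zero {E : Type*} [NormedAddCommGroup E] [NormedSpace ℂ E]
    [FiniteDimensional ℂ E] {g : E → ℂ} {x v : E} {R : ℝ}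
    (hg : DifferentiableOn ℂ g (ball x R)) (hv : ‖v‖ < R)
    (h0 : ∀ j, dirDeriv v g j x = 0) : g (x + v) = 0 := by
  have hR : 0 < R := (norm_nonneg v).trans_lt hv
  -- a disc in the complex line `x + ℂ v` whose image lies in the ball and contains `x + v`
  obtain ⟨ρ, hρ1, hρ⟩ : ∃ ρ : ℝ, 1 < ρ ∧ ρ * ‖v‖ < R := by
    have hcont : Tendsto (fun ρ : ℝ ↦ ρ * ‖v‖) (𝓝[>] 1) (𝓝 (1 * ‖v‖)) :=
      (Continuous.tendsto (by fun_prop) 1).mono_left nhdsWithin_le_nhds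
    rw [one_mul] at hcont
    obtain ⟨ρ, h1, h2⟩ := ((hcont.eventually (gt_mem_nhds hv)).and self_mem_nhdsWithin).exists
    exact ⟨ρ, h2, h1⟩
  have hmem : ∀ t ∈ ball (0 : ℂ) ρ, x + t • v ∈ ball x R := by
    intro t ht
    rw [mem_ball_zero_iff] at ht
    rw [mem_ball, dist_eq_norm, add_sub_cancel_left, norm_smul]
    refine lt_of_le_of_lt ?_ hρ
    gcongr
  have hline : ∀ j, ∀ t ∈ ball (0 : ℂ) ρ,
      HasDerivAt (fun t : ℂ ↦ dirDeriv v g j (x + t • v)) (dirDeriv v g (j + 1) (x + t • v)) t := by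
    intro j t ht
    have h1 := ((differentiableOn_dirDeriv isOpen_ball hg v j).differentiableAt
      (isOpen_ball.mem_nhds (hmem t ht))).hasFDerivAt
    have h2 : HasDerivAt (fun ζ : ℂ ↦ x + ζ • v) v t := by
      simpa using ((hasDerivAt_id t).smul_const v).const_add x
    exact h1.comp_hasDerivAt t h2
  have hiter : ∀ j, ∀ t ∈ ball (0 : ℂ) ρ,
      iteratedDeriv j (fun t : ℂ ↦ g (x + t • v)) t = dirDeriv v g j (x + t • v) := by
    intro j
    induction j with
    | zero => intro t _; simp [dirDeriv]
    | succ j ih =>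
      intro t ht
      rw [iteratedDeriv_succ, ← (hline j t ht).deriv]
      exact Filter.EventuallyEq.deriv_eq
        (Filter.eventually_of_mem (isOpen_ball.mem_nhds ht) ih)
  have hsum := Complex.hasSum_taylorSeries_on_ball (f := fun t : ℂ ↦ g (x + t • v)) (c := 0)
    (r := ρ) (z := 1) (fun t ht ↦ (hline 0 t ht).differentiableAt.differentiableWithinAt)
    (by simpa using hρ1)
  have hz : ∀ n : ℕ, iteratedDeriv n (fun t : ℂ ↦ g (x + t • v)) 0 = 0 := fun n ↦ by
    rw [hiter n 0 (by simpa using one_pos.trans hρ1)]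
    simpa using h0 n
  simp only [hz, smul_zero, one_smul] at hsum
  exact hsum.unique hasSum_zero

/-- The zero set of a nowhere locally vanishing holomorphic function has real codimension at least
two. Each zero `x` is a regular zero of some `∂ᵥʲ g` with `v` in a fixed countable dense set, so the
zero set is covered by countably many sets that are locally inside regular zero sets. -/
theorem dimH_zeroSet_le {E : Type*} [NormedAddCommGroup E] [NormedSpace ℂ E]
    [FiniteDimensional ℂ E] {g : E → ℂ} {U : Set E} (hU : IsOpen U)
    (hg : DifferentiableOn ℂ g U) (hne : ∀ x ∈ U, ∃ᶠ y in 𝓝 x, g y ≠ 0) :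
    dimH {x ∈ U | g x = 0} ≤ ((2 * (finrank ℂ E - 1) : ℕ) : ENNReal) := by
  have : ProperSpace E := FiniteDimensional.proper ℂ E
  let u : ℕ → E := TopologicalSpace.denseSeq E
  let S : ℕ × ℕ → Set E := fun i ↦ {x ∈ U | dirDeriv (u i.1) g i.2 x = 0 ∧
    dirDeriv (u i.1) g (i.2 + 1) x ≠ 0}
  have hcover : {x ∈ U | g x = 0} ⊆ ⋃ i, S i := by
    rintro x ⟨hx, hgx⟩
    obtain ⟨R, hR, hRU⟩ := Metric.isOpen_iff.1 hU x hx
    have hopen : IsOpen {y ∈ ball x R | g y ≠ 0} :=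
      (hg.continuousOn.mono hRU).isOpen_inter_preimage isOpen_ball isOpen_compl_singleton
    obtain ⟨y, hy, hyR⟩ := ((hne x hx).and_eventually (ball_mem_nhds x hR)).exists
    obtain ⟨n, hnR, hn⟩ := (TopologicalSpace.denseRange_denseSeq E).exists_mem_open
      (hopen.preimage (by fun_prop : Continuous fun v : E ↦ x + v))
      ⟨y - x, by simpa using ⟨mem_ball_iff_norm.1 hyR, hy⟩⟩
    have hex : ∃ j, dirDeriv (u n) g j x ≠ 0 := by
      by_contra! h
      exact hn (eq_zero_of_dirDeriv_eq_zero (hg.mono hRU) (by simpa using hnR) h)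
    classical
    obtain ⟨j, hj⟩ : ∃ j, Nat.find hex = j + 1 :=
      Nat.exists_eq_succ_of_ne_zero fun h ↦ Nat.find_spec hex (by rw [h]; exact hgx)
    refine mem_iUnion.2 ⟨(n, j), hx, ?_, ?_⟩
    · exact not_not.1 (Nat.find_min hex (by omega))
    · rw [← hj]
      exact Nat.find_spec hex
  refine (dimH_mono hcover).trans ?_
  rw [dimH_iUnion]
  refine iSup_le fun i ↦ ?_
  by_contra! hlt
  obtain ⟨x, hx, hxt⟩ := exists_mem_nhdsWithin_lt_dimH_of_lt_dimH hlt
  have hstrict := hasStrictFDerivAt_of_differentiableOn hU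
    (differentiableOn_dirDeriv hU hg (u i.1) i.2) hx.1
  obtain ⟨t, ht, htd⟩ := exists_mem_nhdsWithin_dimH_le hstrict
    (fun h ↦ hx.2.2 (by simp [dirDeriv, h])) (S := S i) (fun y hy ↦ hy.2.1)
  exact (hxt t ht).not_ge htd

/-- A set of Hausdorff dimension less than `dim E - 1` does not separate a convex open set: its
projection along `b - a` has dense complement, so a segment parallel to `[a, b]` and arbitrarily
close to it avoids the set. -/
theorem not_separated_of_dimH_lt {E : Type*} [NormedAddCommGroup E] [NormedSpace ℝ E]
    [FiniteDimensional ℝ E] {N A B Z : Set E} (hN : IsOpen N) (hNc : Convex ℝ N) (hA : IsOpen A)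
    (hB : IsOpen B) (hAB : Disjoint A B) (hcov : N ⊆ A ∪ B ∪ Z)
    (hZ : dimH Z < ((finrank ℝ E - 1 : ℕ) : ENNReal))
    {a b : E} (haN : a ∈ N) (hbN : b ∈ N) (ha : a ∈ A) (hb : b ∈ B) : False := by
  have hab : b - a ≠ 0 := by
    intro h
    rw [sub_eq_zero] at h
    exact (Set.disjoint_left.1 hAB ha) (h ▸ hb)
  obtain ⟨l, hl⟩ : ∃ l : E →L[ℝ] ℝ, l (b - a) = 1 := by
    obtain ⟨g, -, hg⟩ := exists_dual_vector ℝ (b - a) (norm_ne_zero_iff.2 hab)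
    have hn : ‖b - a‖ ≠ 0 := norm_ne_zero_iff.2 hab
    exact ⟨‖b - a‖⁻¹ • g, by simp [hg, hn]⟩
  let K := LinearMap.ker (l : E →ₗ[ℝ] ℝ)
  have hK : finrank ℝ K = finrank ℝ E - 1 := by
    have h4 := LinearMap.finrank_range_add_finrank_ker (l : E →ₗ[ℝ] ℝ)
    have h5 : LinearMap.range (l : E →ₗ[ℝ] ℝ) = ⊤ :=
      LinearMap.range_eq_top.2 fun c ↦ ⟨c • (b - a), by
        rw [map_smul, ContinuousLinearMap.coe_coe, hl]; simp⟩
    rw [h5, finrank_top, finrank_self] at h4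
    change 1 + finrank ℝ K = _ at h4
    omega
  -- the projection onto `ker l` along `b - a`
  let P : E →L[ℝ] K := (ContinuousLinearMap.id ℝ E - l.smulRight (b - a)).codRestrict K (by
    intro x
    change l (x - l x • (b - a)) = 0
    rw [map_sub, map_smul, hl]
    simp)
  have hP : ∀ x, (P x : E) = x - l x • (b - a) := fun x ↦ rfl
  have hdense : Dense (P '' Z)ᶜ := by
    refine dense_compl_of_dimH_lt_finrank ?_
    rw [hK]
    exact (P.lipschitz.dimH_image_le Z).trans_lt hZ
  have hopen : IsOpen {k : K | a + (k - P a : E) ∈ A ∩ N ∧ b + (k - P a : E) ∈ B ∩ N} := by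
    have h1 : Continuous fun k : K ↦ a + (k - P a : E) := by fun_prop
    have h2 : Continuous fun k : K ↦ b + (k - P a : E) := by fun_prop
    exact ((hA.inter hN).preimage h1).inter ((hB.inter hN).preimage h2)
  obtain ⟨k, hkZ, hk⟩ := hdense.exists_mem_open hopen ⟨P a, by simp [ha, hb, haN, hbN]⟩
  set a' := a + (k - P a : E) with ha'
  set b' := b + (k - P a : E) with hb'
  have hseg : segment ℝ a' b' ⊆ A ∪ B := by
    intro x hx
    have hxN : x ∈ N := hNc.segment_subset hk.1.2 hk.2.2 hx
    rcases hcov hxN with h | h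
    · exact h
    · exfalso
      apply hkZ
      refine ⟨x, h, ?_⟩
      rw [segment_eq_image'] at hx
      obtain ⟨t, -, rfl⟩ := hx
      have hPab : P (b - a) = 0 := Subtype.ext (by rw [hP, hl]; simp)
      have hPk : ∀ k : K, P (k : E) = k := fun k ↦ Subtype.ext (by
        have : l (k : E) = 0 := k.2
        rw [hP, this]; simp)
      have : b' - a' = b - a := by rw [ha', hb']; abel
      rw [this, ha', map_add, map_add, map_smul, hPab, map_sub, hPk, hPk]
      simp
  obtain ⟨x, -, hxA, hxB⟩ := (convex_segment a' b').isPreconnected A B hA hB hseg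
    ⟨a', left_mem_segment ℝ a' b', hk.1.1⟩ ⟨b', right_mem_segment ℝ a' b', hk.2.1⟩
  exact Set.disjoint_left.1 hAB hxA hxB

/-! ### Openness of maps with discrete fibers -/

theorem differentiableOn_det_fderiv {E : Type*} [NormedAddCommGroup E] [NormedSpace ℂ E]
    [FiniteDimensional ℂ E] {F : E → E} {U : Set E} (hU : IsOpen U)
    (hF : DifferentiableOn ℂ F U) :
    DifferentiableOn ℂ (fun x ↦ LinearMap.det (fderiv ℂ F x : E →ₗ[ℂ] E)) U := by
  let b := Module.finBasis ℂ E
  have h : ∀ i j, DifferentiableOn ℂ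
      (fun x ↦ LinearMap.toMatrix b b (fderiv ℂ F x : E →ₗ[ℂ] E) i j) U := by
    intro i j
    have h1 := differentiableOn_fderiv_apply hU hF (b j)
    have h2 := (LinearMap.toContinuousLinearMap (b.coord i)).differentiable.comp_differentiableOn h1
    refine h2.congr fun x _ ↦ ?_
    simp [LinearMap.toMatrix_apply]
  simp_rw [← LinearMap.det_toMatrix b, Matrix.det_apply]
  refine DifferentiableOn.fun_sum fun σ _ ↦ ?_
  refine DifferentiableOn.const_smul ?_ _
  exact fun x hx ↦ (HasFDerivWithinAt.finsetProd fun i _ ↦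
    (h (σ i) i x hx).hasFDerivWithinAt).differentiableWithinAt

/-- Holomorphic maps with discrete fibers between spaces of equal dimension are open. On a small ball
around `F x₀` the image of a closed ball around `x₀` is closed, and it is a neighborhood of each of
its points that is not a critical value. The critical values have real codimension at least two, so
they cannot separate the image from its complement. -/
theorem image_mem_nhds_of_discrete_fibers {E : Type*} [NormedAddCommGroup E] [NormedSpace ℂ E]
    [FiniteDimensional ℂ E] [Nontrivial E] {F : E → E} {U : Set E} (hU : IsOpen U)
    (hF : DifferentiableOn ℂ F U) (hdisc : ∀ x ∈ U, ∀ᶠ y in 𝓝[≠] x, F y ≠ F x)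
    {x₀ : E} (hx₀ : x₀ ∈ U) : F '' U ∈ 𝓝 (F x₀) := by
  have : ProperSpace E := FiniteDimensional.proper ℂ E
  have : CompleteSpace E := FiniteDimensional.complete ℂ E
  have : FiniteDimensional ℝ E := FiniteDimensional.complexToReal E
  let J : E → ℂ := fun x ↦ LinearMap.det (fderiv ℂ F x : E →ₗ[ℂ] E)
  have hJfreq : ∀ x ∈ U, ∃ᶠ y in 𝓝 x, J y ≠ 0 := by
    intro x hx hev
    obtain ⟨O, hO, hOo, hxO⟩ := _root_.eventually_nhds_iff.1 (hev.and (hU.mem_nhds hx))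
    obtain ⟨y, hy, hfreq⟩ := exists_frequently_eq_of_det_eq_zero hOo ⟨x, hxO⟩
      (hF.mono fun z hz ↦ (hO z hz).2) (fun z hz ↦ not_not.1 (hO z hz).1)
    exact hfreq (hdisc y (hO y hy).2)
  -- a closed ball on which `x₀` is the only solution of `F x = F x₀`
  obtain ⟨ρ, hρ, hρU⟩ : ∃ ρ > 0, closedBall x₀ ρ ⊆ {y | y ∈ U ∧ (y ≠ x₀ → F y ≠ F x₀)} := by
    refine Metric.nhds_basis_closedBall.mem_iff.1 ?_
    exact (hU.eventually_mem hx₀).and (eventually_nhdsWithin_iff.1 (hdisc x₀ hx₀))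
  have hKU : closedBall x₀ ρ ⊆ U := fun y hy ↦ (hρU hy).1
  have hKc : IsCompact (F '' closedBall x₀ ρ) :=
    (isCompact_closedBall x₀ ρ).image_of_continuousOn (hF.continuousOn.mono hKU)
  have hsph : IsCompact (F '' sphere x₀ ρ) :=
    (isCompact_sphere x₀ ρ).image_of_continuousOn
      (hF.continuousOn.mono (sphere_subset_closedBall.trans hKU))
  obtain ⟨δ, hδ, hδs⟩ : ∃ δ > 0, ball (F x₀) δ ⊆ (F '' sphere x₀ ρ)ᶜ := by
    refine Metric.isOpen_iff.1 hsph.isClosed.isOpen_compl _ ?_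
    rintro ⟨y, hy, hyF⟩
    exact (hρU (sphere_subset_closedBall hy)).2 (ne_of_mem_sphere hy hρ.ne') hyF
  have hloc : ∀ x ∈ ball x₀ ρ, J x ≠ 0 → F x ∈ interior (F '' closedBall x₀ ρ) := by
    intro x hx hJ
    have hxU := hKU (ball_subset_closedBall hx)
    have hsurj : LinearMap.range (fderiv ℂ F x : E →ₗ[ℂ] E) = ⊤ := by
      rw [← LinearMap.ker_eq_bot_iff_range_eq_top]
      by_contra h
      exact hJ (LinearMap.det_eq_zero_iff_ker_ne_bot.2 h)
    have := (hasStrictFDerivAt_of_differentiableOn hU hF hxU).map_nhds_eq_of_surj hsurj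
    rw [mem_interior_iff_mem_nhds, ← this]
    exact image_mem_map (mem_of_superset (isOpen_ball.mem_nhds hx) ball_subset_closedBall)
  let Z : Set E := {x ∈ ball x₀ ρ | J x = 0}
  have hballU : ball x₀ ρ ⊆ U := ball_subset_closedBall.trans hKU
  have hZ : dimH (F '' Z) < ((finrank ℝ E - 1 : ℕ) : ENNReal) := by
    have h1 : dimH Z ≤ ((2 * (finrank ℂ E - 1) : ℕ) : ENNReal) :=
      dimH_zeroSet_le isOpen_ball ((differentiableOn_det_fderiv hU hF).mono hballU)
        fun x hx ↦ hJfreq x (hballU hx)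
    have h2 : ContDiffOn ℝ 1 F (ball x₀ ρ) :=
      ((contDiffOn_one_of_differentiableOn hU hF).mono hballU).restrict_scalars ℝ
    refine ((h2.dimH_image_le (convex_ball x₀ ρ) fun x hx ↦ hx.1).trans h1).trans_lt ?_
    have h3 : 0 < finrank ℂ E := finrank_pos
    rw [finrank_real_of_complex]
    exact_mod_cast (by omega : 2 * (finrank ℂ E - 1) < 2 * finrank ℂ E - 1)
  suffices h : ball (F x₀) δ ⊆ F '' closedBall x₀ ρ from
    mem_of_superset (ball_mem_nhds _ hδ) (h.trans (image_mono hKU))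
  intro b hb
  by_contra hbK
  obtain ⟨x, hxJ, hxδ, hxρ⟩ : ∃ x, J x ≠ 0 ∧ F x ∈ ball (F x₀) δ ∧ x ∈ ball x₀ ρ := by
    refine ((hJfreq x₀ hx₀).and_eventually (Eventually.and ?_ (ball_mem_nhds x₀ hρ))).exists
    exact (hF.differentiableAt (hU.mem_nhds hx₀)).continuousAt.eventually_mem (ball_mem_nhds _ hδ)
  refine not_separated_of_dimH_lt (N := ball (F x₀) δ) (A := interior (F '' closedBall x₀ ρ))
    (B := (F '' closedBall x₀ ρ)ᶜ) (Z := F '' Z) isOpen_ball (convex_ball _ _) isOpen_interior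
    hKc.isClosed.isOpen_compl (disjoint_compl_right.mono_left interior_subset) ?_ hZ hxδ hb
    (hloc x hxρ hxJ) hbK
  intro y hy
  by_cases hyK : y ∈ F '' closedBall x₀ ρ
  · obtain ⟨z, hz, rfl⟩ := hyK
    have hzb : z ∈ ball x₀ ρ := by
      rcases (mem_closedBall.1 hz).lt_or_eq with h | h
      · exact h
      · exact (hδs hy ⟨z, h, rfl⟩).elim
    by_cases hJz : J z = 0
    · exact Or.inr ⟨z, ⟨hzb, hJz⟩, rfl⟩
    · exact Or.inl (Or.inl (hloc z hzb hJz))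
  · exact Or.inl (Or.inr hyK)

/-! ### Dynamics of self-maps of bounded open sets -/

/-- The iterates of a holomorphic self-map of a bounded open set are equicontinuous, by the Schwarz
lemma: they all take values in one ball. -/
theorem iterate_equicontinuous {E : Type*} [NormedAddCommGroup E] [NormedSpace ℂ E]
    {F : E → E} {W : Set E} (hW : IsOpen W) (hWb : Bornology.IsBounded W)
    (hF : DifferentiableOn ℂ F W) (hFW : MapsTo F W W) {x : E} (hx : x ∈ W) {ε : ℝ} (hε : 0 < ε) :
    ∃ η > 0, ball x η ⊆ W ∧ ∀ y ∈ ball x η, ∀ n, dist (F^[n] y) (F^[n] x) < ε := by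
  obtain ⟨R, hR, hRW⟩ := Metric.isOpen_iff.1 hW x hx
  obtain ⟨M, hM0, hM⟩ := hWb.exists_pos_norm_le
  refine ⟨min R (ε * R / (2 * M)), by positivity, (ball_subset_ball (min_le_left _ _)).trans hRW,
    fun y hy n ↦ ?_⟩
  have hmaps : MapsTo F^[n] W W := hFW.iterate n
  have hdiff : DifferentiableOn ℂ F^[n] W := by
    clear hmaps
    induction n with
    | zero => exact differentiableOn_id
    | succ n ih =>
      rw [Function.iterate_succ']
      exact hF.comp ih (hFW.iterate n)
  have hyR : y ∈ ball x R := ball_subset_ball (min_le_left _ _) hy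
  have h := Complex.dist_le_div_mul_dist_of_mapsTo_ball (R₂ := 2 * M) (hdiff.mono hRW)
    (fun z hz ↦ ?_) hyR
  · refine h.trans_lt ?_
    have h1 : dist y x < ε * R / (2 * M) := (mem_ball.1 hy).trans_le (min_le_right _ _)
    calc 2 * M / R * dist y x < 2 * M / R * (ε * R / (2 * M)) := by gcongr
      _ = ε := by field_simp
  · rw [mem_closedBall, dist_eq_norm]
    have h1 := hM _ (hmaps (hRW hz))
    have h2 := hM _ (hmaps hx)
    linarith [norm_sub_le (F^[n] z) (F^[n] x)]

/-- A holomorphic self-map of a nonempty bounded open set has no dense orbit. By equicontinuity of the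
iterates, the return times to a small closed ball `K` around an orbit point are bounded by some `T`,
so the orbit stays in the compact set `⋃ i < T, F^[i] '' K ⊆ W`, which forces `W` to be compact. -/
theorem no_dense_orbit_of_mapsTo {E : Type*} [NormedAddCommGroup E] [NormedSpace ℂ E]
    [FiniteDimensional ℂ E] [Nontrivial E] {F : E → E} {W : Set E} (hW : IsOpen W)
    (hWne : W.Nonempty) (hWb : Bornology.IsBounded W)
    (hF : DifferentiableOn ℂ F W) (hFW : MapsTo F W W) {p : ℕ → E}
    (hp : ∀ n, F (p n) = p (n + 1)) (hdense : W ⊆ closure (range p)) : False := by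
  have : ProperSpace E := FiniteDimensional.proper ℂ E
  have : (𝓝[≠] (0 : E)).NeBot := Module.punctured_nhds_neBot ℂ E 0
  have hiter : ∀ j n, F^[j] (p n) = p (n + j) := by
    intro j n
    induction j with
    | zero => rfl
    | succ j ih => rw [Function.iterate_succ_apply', ih, hp]; rfl
  -- there are no isolated points, so every tail of the orbit is still dense
  have htail : ∀ M, ∀ O : Set E, IsOpen O → O.Nonempty → O ⊆ W → ∃ n, M ≤ n ∧ p n ∈ O := by
    intro M O hO hOne hOW
    have hfin : (p '' {n | n < M}).Finite := (Set.finite_lt_nat M).image p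
    obtain ⟨y, hy1, hy2⟩ := (Dense.inter_open_nonempty (hfin.countable.dense_compl ℂ) O hO hOne)
    have hopen : IsOpen (O ∩ (p '' {n | n < M})ᶜ) := hO.inter hfin.isClosed.isOpen_compl
    obtain ⟨_, ⟨hz1, hz2⟩, n, rfl⟩ := _root_.mem_closure_iff.1 (hdense (hOW hy1)) _ hopen ⟨hy1, hy2⟩
    exact ⟨n, not_lt.1 fun h ↦ hz2 ⟨n, h, rfl⟩, hz1⟩
  obtain ⟨N, -, hN⟩ := htail 0 W hW hWne subset_rfl
  obtain ⟨R, hR, hRW⟩ := Metric.nhds_basis_closedBall.mem_iff.1 (hW.mem_nhds hN)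
  set K := closedBall (p N) R with hK
  have hitercont : ∀ j, ContinuousOn F^[j] W := by
    intro j
    induction j with
    | zero => exact continuousOn_id
    | succ j ih =>
      rw [Function.iterate_succ']
      exact hF.continuousOn.comp ih (hFW.iterate j)
  have hret : ∀ x ∈ K, ∃ j, 0 < j ∧ F^[j] x ∈ ball (p N) R := by
    intro x hx
    obtain ⟨η, hη, hηW, hηF⟩ := iterate_equicontinuous hW hWb hF hFW (hRW hx) (half_pos hR)
    obtain ⟨n, -, hn⟩ := htail 0 (ball x η) isOpen_ball ⟨x, mem_ball_self hη⟩ hηW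
    obtain ⟨k, hk, hkb⟩ := htail (n + 1) (ball (p N) (R / 2)) isOpen_ball
      ⟨p N, mem_ball_self (half_pos hR)⟩
      ((ball_subset_ball (by linarith)).trans (ball_subset_closedBall.trans hRW))
    refine ⟨k - n, by omega, ?_⟩
    have h1 := hηF (p n) hn (k - n)
    rw [hiter, Nat.add_sub_cancel' (by omega : n ≤ k), dist_comm] at h1
    rw [mem_ball] at hkb ⊢
    linarith [dist_triangle (F^[k - n] x) (p k) (p N)]
  -- compactness makes the return times to `K` bounded
  have hbound : ∃ T, ∀ x ∈ K, ∃ j, 0 < j ∧ j ≤ T ∧ F^[j] x ∈ K := by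
    choose! j hj0 hj using hret
    obtain ⟨t, htK, ht⟩ := (isCompact_closedBall (p N) R).elim_nhds_subcover
      (fun x ↦ {y ∈ W | F^[j x] y ∈ ball (p N) R}) (fun x hx ↦
        ((hitercont (j x)).isOpen_inter_preimage hW isOpen_ball).mem_nhds ⟨hRW hx, hj x hx⟩)
    refine ⟨t.sup j, fun y hy ↦ ?_⟩
    obtain ⟨x, hxt, hxy⟩ := mem_iUnion₂.1 (ht hy)
    exact ⟨j x, hj0 x (htK x hxt), Finset.le_sup hxt, ball_subset_closedBall hxy.2⟩
  obtain ⟨T, hT⟩ := hbound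
  choose! j hj0 hjT hjK using hT
  -- `y` is an orbit point in `K`, visited `i` steps earlier, whose return time `j y` has not elapsed
  have horb : ∀ n, ∃ y ∈ K, ∃ i, i < j y ∧ F^[i] y = p (N + n) := by
    intro n
    induction n with
    | zero =>
      have : p N ∈ K := mem_closedBall_self hR.le
      exact ⟨p N, this, 0, hj0 _ this, rfl⟩
    | succ n ih =>
      obtain ⟨y, hy, i, hi, hiy⟩ := ih
      have hnext : F^[i + 1] y = p (N + (n + 1)) := by
        rw [Function.iterate_succ_apply', hiy, hp]; rfl
      rcases (Nat.succ_le_of_lt hi).lt_or_eq with h | h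
      · exact ⟨y, hy, i + 1, h, hnext⟩
      · refine ⟨F^[i + 1] y, ?_, 0, ?_, hnext⟩
        · have := hjK y hy
          rwa [← h] at this
        · refine hj0 _ ?_
          have := hjK y hy
          rwa [← h] at this
  let C : Set E := ⋃ i ∈ Finset.range T, F^[i] '' K
  have hCc : IsCompact C := (Finset.range T).isCompact_biUnion fun i _ ↦
    (isCompact_closedBall (p N) R).image_of_continuousOn ((hitercont i).mono hRW)
  have hCW : C ⊆ W := by
    refine iUnion₂_subset fun i _ ↦ ?_
    rintro _ ⟨y, hy, rfl⟩
    exact hFW.iterate i (hRW hy)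
  have hWC : W ⊆ C := by
    intro x hx
    rw [← hCc.isClosed.closure_eq, _root_.mem_closure_iff]
    intro O hO hxO
    obtain ⟨n, hn, hnO⟩ := htail N (O ∩ W) (hO.inter hW) ⟨x, hxO, hx⟩ inter_subset_right
    obtain ⟨y, hy, i, hi, hiy⟩ := horb (n - N)
    rw [Nat.add_sub_cancel' hn] at hiy
    exact ⟨p n, hnO.1, mem_iUnion₂.2 ⟨i, Finset.mem_range.2 (hi.trans_le (hjT y hy)), y, hy, hiy⟩⟩
  have hWcomp : IsCompact W := by rwa [hWC.antisymm hCW]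
  have huniv : W = univ := IsClopen.eq_univ ⟨hWcomp.isClosed, hW⟩ hWne
  have : NoncompactSpace E := NormedSpace.noncompactSpace ℂ E
  exact noncompact_univ E (huniv ▸ hWcomp)

/-- **Remark 5.4.** Let `Ω ⊆ ℂ^m` (`m ≥ 1`) be a bounded domain with
`Ω = int(cl(Ω))`, and let `F` be holomorphic on `Ω` with discrete fibers.  Then `F` has no
orbit whose intersection with some nonempty open `V ⊆ Ω` is dense in `V`. -/
theorem no_dense_orbit_of_discrete_fibers {m : ℕ} (hm : 0 < m)
    (Ω : Set (EuclideanSpace ℂ (Fin m)))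
    (hΩopen : IsOpen Ω) (hΩconn : IsConnected Ω) (hΩbdd : Bornology.IsBounded Ω)
    (hreg : Ω = interior (closure Ω))
    (F : EuclideanSpace ℂ (Fin m) → EuclideanSpace ℂ (Fin m))
    (hF : DifferentiableOn ℂ F Ω)
    (hdisc : ∀ q : EuclideanSpace ℂ (Fin m), ∀ z ∈ Ω ∩ F ⁻¹' {q},
      ∃ W ∈ nhds z, W ∩ (Ω ∩ F ⁻¹' {q}) = {z}) :
    ¬ ∃ (V : Set (EuclideanSpace ℂ (Fin m))) (p : ℕ → EuclideanSpace ℂ (Fin m)),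
        IsOpen V ∧ V.Nonempty ∧ V ⊆ Ω ∧
        (∀ n, p n ∈ Ω) ∧ (∀ n, F (p n) = p (n + 1)) ∧
        V ⊆ closure (Set.range p ∩ V) := by
  rintro ⟨V, p, hV, hVne, hVΩ, hpΩ, hp, hdense⟩
  have : Nonempty (Fin m) := ⟨⟨0, hm⟩⟩
  have hVcl : V ⊆ closure (range p) := hdense.trans (closure_mono inter_subset_left)
  set W := interior (closure (range p)) with hWdef
  have hWΩ : W ⊆ Ω := by
    rw [hreg]
    exact interior_mono (closure_mono (range_subset_iff.2 hpΩ))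
  have hdisc' : ∀ x ∈ W, ∀ᶠ y in 𝓝[≠] x, F y ≠ F x := by
    intro x hx
    obtain ⟨S, hS, hSx⟩ := hdisc (F x) x ⟨hWΩ hx, rfl⟩
    refine eventually_nhdsWithin_iff.2 ?_
    filter_upwards [hS, hΩopen.mem_nhds (hWΩ hx)] with y hyS hyΩ hyx hFy
    have : y ∈ S ∩ (Ω ∩ F ⁻¹' {F x}) := ⟨hyS, hyΩ, hFy⟩
    rw [hSx] at this
    exact hyx this
  have hcl : F '' W ⊆ closure (range p) := by
    rintro _ ⟨x, hx, rfl⟩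
    have hcont : ContinuousAt F x := (hF.differentiableAt (hΩopen.mem_nhds (hWΩ hx))).continuousAt
    refine closure_mono ?_ (mem_closure_image hcont (interior_subset hx))
    rintro _ ⟨_, ⟨n, rfl⟩, rfl⟩
    exact ⟨n + 1, (hp n).symm⟩
  have hFW : MapsTo F W W := fun x hx ↦ mem_interior_iff_mem_nhds.2 <|
    mem_of_superset (image_mem_nhds_of_discrete_fibers isOpen_interior (hF.mono hWΩ) hdisc' hx) hcl
  exact no_dense_orbit_of_mapsTo isOpen_interior (hVne.mono (interior_maximal hVcl hV))
    (hΩbdd.subset hWΩ) (hF.mono hWΩ) hFW hp interior_subset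
end
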